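/- arXiv:2006.07753 — 3 statements merged into one kernel-verified Lean document; each statement's English description precedes it below -/
import Mathlib

section
/- If f = h·conj(g) is a sense-preserving locally univalent logharmonic mapping on a simply connected domain with dilatation ω, and P_f ≡ 0, then ω is a constant; moreover, writing ω = (1−k)/k with Re(k) > 1/2, one has h(z) = (az + b)^k for some complex constants a, b (with az + b nonvanishing on the domain). -/
/-!
Write `ω` for the dilatation. Where `ω' ≠ 0`, the equation `P_f = 0` exhibits
`q = conj ω / (1 - |ω|²)` as a quotient of holomorphic functions, so `conj ω = q / (1 + q ω)` is
holomorphic along with `ω`, and then `ω' = 0` after all. Hence `ω` is a constant `c`, and what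
remains of `P_f = 0` is `h'' / h' + c h' / h = 0`. In terms of a logarithm `L` of `h` this reads
`L'' + (1 + c) L'² = 0`, which says that `exp ((1 + c) L)`, a branch of `h ^ (1 / k)` with
`k = (1 + c)⁻¹`, has vanishing second derivative.
-/

open Complex

/-- Second dilatation ω = g'h/(g h') of the logharmonic mapping h·conj g. -/
noncomputable def omegaOf (h g : ℂ → ℂ) (z : ℂ) : ℂ :=
  deriv g z * h z / (g z * deriv h z)

/-- Pre-Schwarzian derivative of the logharmonic mapping h·conj g. -/
noncomputable def preSch (h g : ℂ → ℂ) (z : ℂ) : ℂ :=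
  deriv (deriv h) z / deriv h z + omegaOf h g z * deriv h z / h z -
    deriv (omegaOf h g) z * (starRingEnd ℂ) (omegaOf h g z) /
      (1 - (‖omegaOf h g z‖ : ℂ) ^ 2)

open Filter Topology ComplexConjugate

section Antiholomorphic

variable {w F : ℂ → ℂ} {z : ℂ}

theorem deriv_eq_zero_of_differentiableAt_conj (hw : DifferentiableAt ℂ w z)
    (hconj : DifferentiableAt ℂ (fun x => conj (w x)) z) : deriv w z = 0 := by
  have hfderiv (v : ℂ) : fderiv ℝ (fun x => conj (w x)) z v = conj (v * deriv w z) := by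
    have hcomp := conjCLE.toContinuousLinearMap.hasFDerivAt.comp z
      (hw.hasDerivAt.hasFDerivAt.restrictScalars ℝ)
    exact congrArg (fun T : ℂ →L[ℝ] ℂ => T v) hcomp.fderiv
  have cauchyRiemann := (differentiableAt_complex_iff_differentiableAt_real.mp hconj).2
  have hdouble : 2 * I * conj (deriv w z) = 0 := by
    simp only [hfderiv, map_mul, conj_I, one_mul, smul_eq_mul] at cauchyRiemann
    linear_combination -cauchyRiemann
  simpa using hdouble

theorem one_sub_ofReal_norm_sq_ne_zero (hz : ‖z‖ ≠ 1) : 1 - (‖z‖ : ℂ) ^ 2 ≠ 0 := by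
  rw [sub_ne_zero]
  have hsq : 1 ≠ ‖z‖ ^ 2 :=
    fun h => hz ((pow_eq_one_iff_of_nonneg (norm_nonneg z) two_ne_zero).mp h.symm)
  exact_mod_cast hsq

theorem deriv_eq_zero_of_differentiableAt_conj_div (hw : DifferentiableAt ℂ w z) (hz : ‖w z‖ ≠ 1)
    (hq : DifferentiableAt ℂ (fun x => conj (w x) / (1 - (‖w x‖ : ℂ) ^ 2)) z) :
    deriv w z = 0 := by
  set q : ℂ → ℂ := fun x => conj (w x) / (1 - (‖w x‖ : ℂ) ^ 2) with q_def
  have one_add_mul {x : ℂ} (hx : ‖w x‖ ≠ 1) : 1 + q x * w x = (1 - (‖w x‖ : ℂ) ^ 2)⁻¹ := by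
    have hx' := one_sub_ofReal_norm_sq_ne_zero hx
    simp only [q_def]
    field_simp
    linear_combination conj_mul' (w x)
  have hden : 1 + q z * w z ≠ 0 := by
    rw [one_add_mul hz]
    exact inv_ne_zero (one_sub_ofReal_norm_sq_ne_zero hz)
  have hconj : (fun x => conj (w x)) =ᶠ[𝓝 z] fun x => q x / (1 + q x * w x) := by
    filter_upwards [hw.continuousAt.norm.eventually_ne hz] with x hx
    rw [one_add_mul hx, div_inv_eq_mul, q_def,
      div_mul_cancel₀ _ (one_sub_ofReal_norm_sq_ne_zero hx)]
  exact deriv_eq_zero_of_differentiableAt_conj hw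
    ((hq.div ((hq.mul hw).const_add 1) hden).congr_of_eventuallyEq hconj)

theorem deriv_eq_zero_of_deriv_mul_conj_div_eventuallyEq (hw : AnalyticAt ℂ w z)
    (hz : ‖w z‖ ≠ 1) (hF : DifferentiableAt ℂ F z)
    (heq : (fun x => deriv w x * conj (w x) / (1 - (‖w x‖ : ℂ) ^ 2)) =ᶠ[𝓝 z] F) :
    deriv w z = 0 := by
  by_contra hne
  have hq : (fun x => conj (w x) / (1 - (‖w x‖ : ℂ) ^ 2)) =ᶠ[𝓝 z] fun x => F x / deriv w x := by
    filter_upwards [heq, hw.deriv.continuousAt.eventually_ne hne] with x hx hx'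
    rw [← hx, mul_div_assoc, mul_div_cancel_left₀ _ hx']
  exact hne <| deriv_eq_zero_of_differentiableAt_conj_div hw.differentiableAt hz
    ((hF.div hw.deriv.differentiableAt hne).congr_of_eventuallyEq hq)

end Antiholomorphic

section Dilatation

variable {h g : ℂ → ℂ} {z : ℂ}

theorem analyticAt_omegaOf (hh : AnalyticAt ℂ h z) (hg : AnalyticAt ℂ g z) (hg0 : g z ≠ 0)
    (hh' : deriv h z ≠ 0) : AnalyticAt ℂ (omegaOf h g) z :=
  (hg.deriv.mul hh).div (hg.mul hh.deriv) (mul_ne_zero hg0 hh')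

theorem deriv_omegaOf_eq_zero_of_preSch_eventuallyEq_zero (hh : AnalyticAt ℂ h z)
    (hg : AnalyticAt ℂ g z) (hh0 : h z ≠ 0) (hg0 : g z ≠ 0) (hh' : deriv h z ≠ 0)
    (hω : ‖omegaOf h g z‖ ≠ 1) (hP : preSch h g =ᶠ[𝓝 z] 0) : deriv (omegaOf h g) z = 0 := by
  have hωz := analyticAt_omegaOf hh hg hg0 hh'
  have hF : AnalyticAt ℂ
      (fun x => deriv (deriv h) x / deriv h x + omegaOf h g x * deriv h x / h x) z :=
    (hh.deriv.deriv.div hh.deriv hh').add ((hωz.mul hh.deriv).div hh hh0)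
  refine deriv_eq_zero_of_deriv_mul_conj_div_eventuallyEq hωz hω hF.differentiableAt ?_
  filter_upwards [hP] with x hx
  exact (sub_eq_zero.mp hx).symm

end Dilatation

theorem exists_eqOn_smul_add_of_deriv_deriv_eq_zero {𝕜 E : Type*} [RCLike 𝕜]
    [NormedAddCommGroup E] [NormedSpace 𝕜 E] {f : 𝕜 → E} {s : Set 𝕜}
    (hs : IsOpen s) (hs' : IsPreconnected s) (hf : DifferentiableOn 𝕜 f s)
    (hf' : DifferentiableOn 𝕜 (deriv f) s) (hf'' : s.EqOn (deriv (deriv f)) 0) :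
    ∃ a b, s.EqOn f fun z => z • a + b := by
  obtain ⟨a, ha⟩ := hs.exists_is_const_of_deriv_eq_zero hs' hf' hf''
  have hderiv : ∀ z ∈ s, HasDerivAt (fun z => f z - z • a) 0 z := fun z hz => by
    simpa only [ha z hz, one_smul, id_eq, sub_self] using
      (hf.differentiableAt (hs.mem_nhds hz)).hasDerivAt.fun_sub ((hasDerivAt_id z).smul_const a)
  obtain ⟨b, hb⟩ := hs.exists_is_const_of_deriv_eq_zero hs'
    (fun z hz => (hderiv z hz).differentiableAt.differentiableWithinAt)
    (fun z hz => (hderiv z hz).deriv)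
  exact ⟨a, b, fun z hz => eq_add_of_sub_eq' (hb z hz)⟩

theorem exists_differentiableOn_eqOn_exp_comp {U : Set ℂ} (hUc : IsSimplyConnected U)
    (hUo : IsOpen U) {f : ℂ → ℂ} (hf : DifferentiableOn ℂ f U) (hf0 : ∀ z ∈ U, f z ≠ 0) :
    ∃ L : ℂ → ℂ, DifferentiableOn ℂ L U ∧ U.EqOn (exp ∘ L) f := by
  obtain ⟨L, hLc, hL⟩ := exists_continuousOn_eqOn_exp_comp hUc hUo hf.continuousOn
    (by rintro ⟨z, hz, hfz⟩; exact hf0 z hz hfz)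
  refine ⟨L, fun z hz => ?_, hL⟩
  have hU := hUo.mem_nhds hz
  exact (HasDerivAt.of_comp_left (hLc.continuousAt hU) (hasDerivAt_exp (L z))
    (hf.differentiableAt hU).hasDerivAt (exp_ne_zero _)
    (hL.eventuallyEq_of_mem hU)).differentiableAt.differentiableWithinAt

section LogarithmicEquation

variable {f L : ℂ → ℂ} {z : ℂ}

theorem deriv_deriv_exp_comp (hL : AnalyticAt ℂ L z) :
    deriv (deriv fun x => exp (L x)) z = (deriv (deriv L) z + deriv L z ^ 2) * exp (L z) := by
  have hderiv : (deriv fun x => exp (L x)) =ᶠ[𝓝 z] fun x => exp (L x) * deriv L x := by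
    filter_upwards [hL.eventually_analyticAt] with x hx
    exact deriv_cexp hx.differentiableAt
  rw [hderiv.deriv_eq, (hL.differentiableAt.hasDerivAt.cexp.fun_mul
    hL.deriv.differentiableAt.hasDerivAt).deriv]
  ring

theorem deriv_deriv_exp_one_add_mul_eq_zero (hL : AnalyticAt ℂ L z)
    (hf : (fun x => exp (L x)) =ᶠ[𝓝 z] f) (hf' : deriv f z ≠ 0) {c : ℂ}
    (hode : logDeriv (deriv f) z + c * logDeriv f z = 0) :
    deriv (deriv fun x => exp ((1 + c) * L x)) z = 0 := by
  have hode_log : deriv (deriv L) z + (1 + c) * deriv L z ^ 2 = 0 := by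
    rw [← hf.deriv_eq, deriv_cexp hL.differentiableAt] at hf'
    rw [logDeriv_apply, logDeriv_apply, ← hf.deriv.deriv_eq, ← hf.deriv_eq,
      ← hf.eq_of_nhds, deriv_deriv_exp_comp hL, deriv_cexp hL.differentiableAt] at hode
    have hL' : deriv L z ≠ 0 := right_ne_zero_of_mul hf'
    have hexp := exp_ne_zero (L z)
    field_simp at hode
    linear_combination hode
  rw [deriv_deriv_exp_comp (L := fun x => (1 + c) * L x) (analyticAt_const.mul hL)]
  simp only [deriv_const_mul_field']
  linear_combination (1 + c) * exp ((1 + c) * L z) * hode_log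

theorem exists_exp_eq_affine_of_logDeriv_deriv_add_eq_zero {U : Set ℂ} (hUc : IsSimplyConnected U)
    (hUo : IsOpen U) (hf : DifferentiableOn ℂ f U) (hf0 : ∀ z ∈ U, f z ≠ 0)
    (hf' : ∀ z ∈ U, deriv f z ≠ 0) {c : ℂ} (hc : 1 + c ≠ 0)
    (hode : ∀ z ∈ U, logDeriv (deriv f) z + c * logDeriv f z = 0) :
    ∃ (a b : ℂ) (ℓ : ℂ → ℂ), DifferentiableOn ℂ ℓ U ∧ (∀ z ∈ U, exp (ℓ z) = a * z + b) ∧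
      ∀ z ∈ U, f z = exp ((1 + c)⁻¹ * ℓ z) := by
  obtain ⟨L, hL, hLf⟩ := exists_differentiableOn_eqOn_exp_comp hUc hUo hf hf0
  have hℓ : DifferentiableOn ℂ (fun z => (1 + c) * L z) U := hL.const_mul (1 + c)
  have hsecond : U.EqOn (deriv (deriv fun z => exp ((1 + c) * L z))) 0 := fun z hz =>
    deriv_deriv_exp_one_add_mul_eq_zero (hL.analyticAt (hUo.mem_nhds hz))
      (hLf.eventuallyEq_of_mem (hUo.mem_nhds hz)) (hf' z hz) (hode z hz)
  obtain ⟨a, b, hab⟩ := exists_eqOn_smul_add_of_deriv_deriv_eq_zero hUo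
    hUc.isPathConnected.isConnected.isPreconnected hℓ.cexp (hℓ.cexp.deriv hUo) hsecond
  refine ⟨a, b, fun z => (1 + c) * L z, hℓ, fun z hz => ?_, fun z hz => ?_⟩
  · exact (hab hz).trans (congrArg (· + b) (mul_comm z a))
  · rw [inv_mul_cancel_left₀ hc]
    exact (hLf hz).symm

end LogarithmicEquation

theorem one_half_lt_re_inv_one_add_iff {c : ℂ} : 1 / 2 < ((1 + c)⁻¹).re ↔ ‖c‖ < 1 := by
  rcases eq_or_ne (1 + c) 0 with h0 | h0
  · simp [eq_neg_of_add_eq_zero_right h0]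
  · have hsq : ‖c‖ < 1 ↔ normSq c < 1 := by
      rw [normSq_eq_norm_sq, sq_lt_one_iff₀ (norm_nonneg c)]
    rw [hsq, inv_re, div_lt_div_iff₀ two_pos (normSq_pos.mpr h0)]
    simp only [normSq_apply, add_re, add_im, one_re, one_im]
    constructor <;> intro h <;> linarith

theorem preSch_eq_zero_characterization
    (Ω : Set ℂ) (hΩ : IsOpen Ω) (hconn : IsPreconnected Ω)
    (hsc : SimplyConnectedSpace Ω)
    (h g : ℂ → ℂ)
    (hh : DifferentiableOn ℂ h Ω) (hg : DifferentiableOn ℂ g Ω)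
    (hh0 : ∀ z ∈ Ω, h z ≠ 0) (hg0 : ∀ z ∈ Ω, g z ≠ 0)
    (hh' : ∀ z ∈ Ω, deriv h z ≠ 0)
    (hω : ∀ z ∈ Ω, ‖omegaOf h g z‖ < 1)
    (hP : ∀ z ∈ Ω, preSch h g z = 0) :
    ∃ (k a b : ℂ) (ℓ : ℂ → ℂ),
      1 / 2 < k.re ∧
      (∀ z ∈ Ω, omegaOf h g z = (1 - k) / k) ∧
      DifferentiableOn ℂ ℓ Ω ∧
      (∀ z ∈ Ω, a * z + b ≠ 0) ∧
      (∀ z ∈ Ω, Complex.exp (ℓ z) = a * z + b) ∧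
      (∀ z ∈ Ω, h z = Complex.exp (k * ℓ z)) := by
  have hUc : IsSimplyConnected Ω := hsc
  have hωd : ∀ z ∈ Ω, deriv (omegaOf h g) z = 0 := fun z hz =>
    have hΩz := hΩ.mem_nhds hz
    deriv_omegaOf_eq_zero_of_preSch_eventuallyEq_zero (hh.analyticAt hΩz) (hg.analyticAt hΩz)
      (hh0 z hz) (hg0 z hz) (hh' z hz) (hω z hz).ne (eventuallyEq_of_mem hΩz hP)
  obtain ⟨c, hc⟩ := hΩ.exists_is_const_of_deriv_eq_zero hconn
    (fun z hz => (analyticAt_omegaOf (hh.analyticAt (hΩ.mem_nhds hz))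
      (hg.analyticAt (hΩ.mem_nhds hz)) (hg0 z hz) (hh' z hz)).differentiableWithinAt) hωd
  obtain ⟨z₀, hz₀⟩ := hUc.nonempty
  have hc_lt : ‖c‖ < 1 := hc z₀ hz₀ ▸ hω z₀ hz₀
  have hc_ne : 1 + c ≠ 0 := fun h0 => by
    simp [eq_neg_of_add_eq_zero_right h0] at hc_lt
  have hode : ∀ z ∈ Ω, logDeriv (deriv h) z + c * logDeriv h z = 0 := fun z hz => by
    simpa [preSch, logDeriv_apply, mul_div_assoc, hωd z hz, hc z hz] using hP z hz
  obtain ⟨a, b, ℓ, hℓ, hexp, hpow⟩ :=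
    exists_exp_eq_affine_of_logDeriv_deriv_add_eq_zero hUc hΩ hh hh0 hh' hc_ne hode
  refine ⟨(1 + c)⁻¹, a, b, ℓ, one_half_lt_re_inv_one_add_iff.mpr hc_lt, fun z hz => ?_, hℓ,
    fun z hz => hexp z hz ▸ exp_ne_zero _, hexp, hpow⟩
  rw [hc z hz]
  field_simp
  ring
end

section
/- Becker-type univalence criterion for logharmonic mappings: let f = h·conj(g) : 𝔻 → ℂ be a nonvanishing sense-preserving logharmonic mapping with dilatation ω. If for all z ∈ 𝔻, |z·P_f(z)| + (1+|ω(z)|)·|z·h'(z)/h(z)| + |z·ω'(z)|/(1−|ω(z)|²) ≤ 1/(1−|z|²), then f is univalent in 𝔻. -/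
open Complex

/-!
If `f = h * conj g` takes the same value at `x` and `y` and `G` is a branch of `log g`, choose a
unimodular `l` with `l * (G x - G y) = conj (G x - G y)`. Then the analytic function `h * g ^ l`
also takes the same value at `x` and `y`. Its pre-Schwarzian differs from that of `f` by
`(l - 1) * ω * h' / h` and a multiple of `ω'` of modulus exactly `‖ω'‖ / (1 - ‖ω‖ ^ 2)`, so the
hypothesis on `f` gives Becker's condition for `h * g ^ l`, which is therefore injective.

Becker's criterion for an analytic `φ` comes from its Loewner chain: the bound makes the chain
locally injective at every time, and a point whose image is held fixed moves inward as time
increases. Hence two points with a common image can be followed to a later time. In the parameter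
`s = e⁻²ᵗ` infinite time is `s = 0`, where the rescaled domain shrinks to a point. By compactness
there would be a collision with minimal `s > 0`, and following it to a smaller `s` gives a
contradiction.
-/

open Set Filter Metric Topology ComplexConjugate

section Collisions

variable {X Y : Type*} [TopologicalSpace X] [TopologicalSpace Y] [T2Space Y]
  {G : X → Y} {D : Set X}

lemma isCompact_collisions (hD : IsCompact D) (hG : ContinuousOn G D)
    (hloc : ∀ p ∈ D, ∃ U ∈ 𝓝 p, InjOn G U) :
    IsCompact {r ∈ D ×ˢ D | r.1 ≠ r.2 ∧ G r.1 = G r.2} := by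
  let W : Set (X × X) := {r | ∃ U, IsOpen U ∧ InjOn G U ∧ r ∈ U ×ˢ U}
  have hW : IsOpen W := by
    refine isOpen_iff_mem_nhds.2 fun r ⟨U, hUo, hU, hr⟩ => ?_
    exact mem_of_superset ((hUo.prod hUo).mem_nhds hr) fun _ hs => ⟨U, hUo, hU, hs⟩
  have hGG : ContinuousOn (fun r : X × X => (G r.1, G r.2)) (D ×ˢ D) := hG.prodMap hG
  obtain ⟨E, hE, hDE⟩ := continuousOn_iff_isClosed.1 hGG _ isClosed_diagonal
  convert (hD.prod hD).inter_right (hE.inter hW.isClosed_compl) using 1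
  ext ⟨p, q⟩
  have hmemE : (p, q) ∈ D ×ˢ D → ((p, q) ∈ E ↔ G p = G q) := fun hpq => by
    simpa [hpq.1, hpq.2] using (Set.ext_iff.1 hDE (p, q)).symm
  constructor
  · rintro ⟨hpq, hne, heq⟩
    exact ⟨hpq, (hmemE hpq).2 heq, fun ⟨_, _, hU, hpU, hqU⟩ => hne (hU hpU hqU heq)⟩
  · rintro ⟨hpq, hpqE, hpqW⟩
    refine ⟨hpq, fun hdiag : p = q => ?_, (hmemE hpq).1 hpqE⟩
    subst hdiag
    obtain ⟨U, hUp, hU⟩ := hloc p hpq.1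
    obtain ⟨V, hVU, hV, hpV⟩ := mem_nhds_iff.1 hUp
    exact hpqW ⟨V, hV, hU.mono hVU, hpV, hpV⟩

lemma injOn_of_collision_descent {α : Type*} [LinearOrder α] [TopologicalSpace α]
    [ClosedIicTopology α] {τ : X → α} (hD : IsCompact D) (hG : ContinuousOn G D)
    (hloc : ∀ p ∈ D, ∃ U ∈ 𝓝 p, InjOn G U) (hτ : ContinuousOn τ D)
    (hdescent : ∀ p ∈ D, ∀ q ∈ D, p ≠ q → G p = G q →
      ∃ p' ∈ D, ∃ q' ∈ D, p' ≠ q' ∧ G p' = G q' ∧ τ p' < τ p) :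
    InjOn G D := by
  intro p hp q hq heq
  by_contra hne
  obtain ⟨⟨p₀, q₀⟩, ⟨⟨hp₀, hq₀⟩, hne₀, heq₀⟩, hmin⟩ :=
    (isCompact_collisions hD hG hloc).exists_isMinOn ⟨(p, q), ⟨hp, hq⟩, hne, heq⟩
      (hτ.comp continuousOn_fst fun _ hr => hr.1.1)
  obtain ⟨p', hp', q', hq', hne', heq', hlt⟩ := hdescent p₀ hp₀ q₀ hq₀ hne₀ heq₀
  exact (hmin (show (p', q') ∈ _ from ⟨⟨hp', hq'⟩, hne', heq'⟩)).not_gt hlt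

end Collisions

section InverseFunction

variable {𝕜 E F : Type*} [NontriviallyNormedField 𝕜] [NormedAddCommGroup E] [NormedSpace 𝕜 E]
  [CompleteSpace E] [NormedAddCommGroup F] [NormedSpace 𝕜 F] {G : E → F} {G' : E ≃L[𝕜] F} {p : E}

lemma exists_mem_nhds_injOn_of_hasStrictFDerivAt (hG : HasStrictFDerivAt G (G' : E →L[𝕜] F) p) :
    ∃ U ∈ 𝓝 p, InjOn G U :=
  ⟨_, hG.eventually_left_inverse, LeftInvOn.injOn fun _ hx => hx⟩

lemma exists_hasDerivAt_lift {γ : 𝕜 → F} {γ' : F} {t₀ : 𝕜}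
    (hG : HasStrictFDerivAt G (G' : E →L[𝕜] F) p) (hγ : HasDerivAt γ γ' t₀) (hγp : γ t₀ = G p) :
    ∃ P : 𝕜 → E, P t₀ = p ∧ HasDerivAt P (G'.symm γ') t₀ ∧ ∀ᶠ t in 𝓝 t₀, G (P t) = γ t := by
  refine ⟨fun t => hG.localInverse G G' p (γ t), by simp [hγp], ?_, ?_⟩
  · exact (hγp ▸ hG.to_localInverse.hasFDerivAt).comp_hasDerivAt t₀ hγ
  · exact hγ.continuousAt.eventually (hγp ▸ hG.eventually_right_inverse)

end InverseFunction

lemma ne_zero_of_norm_sub_one_lt_one {w : ℂ} (hw : ‖w - 1‖ < 1) : w ≠ 0 := by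
  rintro rfl
  simp at hw

lemma half_lt_re_inv {w : ℂ} (hw : ‖w - 1‖ < 1) : 1 / 2 < (w⁻¹).re := by
  have hsq : normSq w < 2 * w.re := by
    have h : ‖w - 1‖ ^ 2 < 1 := pow_lt_one₀ (norm_nonneg _) hw two_ne_zero
    rw [← normSq_eq_norm_sq, normSq_sub, map_one, map_one, mul_one] at h
    linarith
  rw [inv_re, lt_div_iff₀ (normSq_pos.2 (ne_zero_of_norm_sub_one_lt_one hw))]
  linarith

lemma eventually_norm_sq_mul_lt {ζ : ℝ → ℂ} {s : ℝ} {w : ℂ} (hs : s ≠ 0) (hζ0 : ζ s ≠ 0)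
    (hζ : HasDerivAt ζ (ζ s / (s * w)) s) (hw : ‖w - 1‖ < 1) :
    ∀ᶠ t in 𝓝[<] s, ‖ζ t‖ ^ 2 * s < ‖ζ s‖ ^ 2 * t := by
  have hinner : inner ℝ (ζ s) (ζ s / (s * w)) * s = ‖ζ s‖ ^ 2 * (w⁻¹).re := by
    have : ζ s / (s * w) = ((s⁻¹ : ℝ) : ℂ) * (ζ s * w⁻¹) := by push_cast; field_simp
    rw [this, Complex.inner, mul_assoc, mul_right_comm (ζ s), mul_conj,
      re_ofReal_mul, re_ofReal_mul, normSq_eq_norm_sq]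
    field_simp
  have hderiv : HasDerivAt (fun t => ‖ζ t‖ ^ 2 * s - ‖ζ s‖ ^ 2 * t)
      (‖ζ s‖ ^ 2 * (2 * (w⁻¹).re - 1)) s := by
    refine ((hζ.norm_sq.mul_const s).sub ((hasDerivAt_id s).const_mul _)).congr_deriv ?_
    linear_combination 2 * hinner
  have hpos : 0 < ‖ζ s‖ ^ 2 * (2 * (w⁻¹).re - 1) :=
    mul_pos (by positivity) (by linarith [half_lt_re_inv hw])
  have hsign := eventually_nhdsWithin_sign_eq_of_deriv_pos (hpos.trans_eq hderiv.deriv.symm)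
    (sub_self _)
  filter_upwards [nhdsWithin_le_nhds hsign, self_mem_nhdsWithin] with t ht hts
  rw [sign_neg (sub_neg.2 (mem_Iio.1 hts)), sign_eq_neg_one_iff] at ht
  exact sub_neg.1 ht

/-- Becker's Loewner chain `φ (e⁻ᵗ z) + (eᵗ - e⁻ᵗ) z φ' (e⁻ᵗ z)` for the univalence criterion,
in the parameters `s = e⁻²ᵗ` and `ζ = e⁻ᵗ z`. It is multiplied by `s`, so that it extends to
`s = 0`, and paired with `s`, so that one injectivity statement covers all times. -/
noncomputable def beckerMap (φ : ℂ → ℂ) (p : ℝ × ℂ) : ℝ × ℂ :=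
  (p.1, p.1 * φ p.2 + (1 - p.1) * (p.2 * deriv φ p.2))

/-- The domain of `beckerMap`: the times `s = e⁻²ᵗ ∈ [0, 1]` and the points `ζ = e⁻ᵗ z` with
`‖z‖ ^ 2 ≤ ρ`. The slice at `s = 0` is the single point `0`. -/
def beckerRegion (ρ : ℝ) : Set (ℝ × ℂ) :=
  {p | p.1 ∈ Icc 0 1 ∧ ‖p.2‖ ^ 2 ≤ ρ * p.1}

lemma isCompact_beckerRegion (ρ : ℝ) : IsCompact (beckerRegion ρ) := by
  have hclosed : IsClosed (beckerRegion ρ) :=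
    (isClosed_Icc.preimage continuous_fst).inter
      (isClosed_le (continuous_snd.norm.pow 2) (continuous_fst.const_mul ρ))
  have hcompact : IsCompact (Icc (0 : ℝ) 1 ×ˢ closedBall (0 : ℂ) √|ρ|) :=
    isCompact_Icc.prod (isCompact_closedBall _ _)
  refine hcompact.of_isClosed_subset hclosed ?_
  rintro ⟨s, z⟩ ⟨hs, hz⟩
  refine ⟨hs, mem_closedBall_zero_iff.2 (Real.le_sqrt_of_sq_le (hz.trans ?_))⟩
  calc ρ * s ≤ |ρ| * s := mul_le_mul_of_nonneg_right (le_abs_self ρ) hs.1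
    _ ≤ |ρ| := mul_le_of_le_one_right (abs_nonneg ρ) hs.2

lemma eq_zero_or_norm_sq_lt_of_mem_beckerRegion {ρ s : ℝ} {z : ℂ} (hρ : ρ < 1)
    (hz : (s, z) ∈ beckerRegion ρ) : z = 0 ∨ ‖z‖ ^ 2 < s := by
  obtain ⟨⟨hs, -⟩, hz⟩ := hz
  rcases hs.eq_or_lt with rfl | hs
  · left
    simpa using hz
  · exact .inr (hz.trans_lt (mul_lt_of_lt_one_left hs hρ))

lemma mem_ball_of_mem_beckerRegion {ρ s : ℝ} {z : ℂ} (hρ : ρ < 1)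
    (hz : (s, z) ∈ beckerRegion ρ) : z ∈ ball (0 : ℂ) 1 := by
  rcases eq_zero_or_norm_sq_lt_of_mem_beckerRegion hρ hz with rfl | hlt
  · exact mem_ball_self one_pos
  · rw [mem_ball_zero_iff, ← sq_lt_one_iff₀ (norm_nonneg z)]
    exact hlt.trans_le hz.1.2

lemma norm_one_sub_mul_lt_one {ρ s : ℝ} {z p : ℂ} (hρ : ρ < 1) (hz : (s, z) ∈ beckerRegion ρ)
    (hp : ‖z * p‖ ≤ 1 / (1 - ‖z‖ ^ 2)) : ‖(1 - s : ℂ) * (z * p)‖ < 1 := by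
  rcases eq_zero_or_norm_sq_lt_of_mem_beckerRegion hρ hz with rfl | hlt
  · simp
  have hs : 0 ≤ 1 - s := sub_nonneg.2 hz.1.2
  have hpos : 0 < 1 - ‖z‖ ^ 2 := by linarith
  calc ‖(1 - s : ℂ) * (z * p)‖ = (1 - s) * ‖z * p‖ := by
        rw [norm_mul, ← ofReal_one, ← ofReal_sub, norm_real, Real.norm_of_nonneg hs]
    _ ≤ (1 - s) * (1 / (1 - ‖z‖ ^ 2)) := mul_le_mul_of_nonneg_left hp hs
    _ < 1 := by
        rw [mul_one_div, div_lt_one hpos]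
        linarith

/-- The shear `(t, z) ↦ (t, a * z + t * b)`, as an equivalence: the real derivative of `beckerMap`
has this form. -/
noncomputable def shearEquiv (a b : ℂ) (ha : a ≠ 0) : (ℝ × ℂ) ≃L[ℝ] ℝ × ℂ :=
  (ContinuousLinearEquiv.refl ℝ ℝ).skewProd
    ((ContinuousLinearEquiv.unitsEquivAut ℂ (Units.mk0 a ha)).restrictScalars ℝ)
    (ContinuousLinearMap.toSpanSingleton ℝ b)

@[simp]
lemma shearEquiv_apply {a b : ℂ} (ha : a ≠ 0) (p : ℝ × ℂ) :
    shearEquiv a b ha p = (p.1, a * p.2 + p.1 * b) := by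
  simp [shearEquiv, mul_comm]

@[simp]
lemma shearEquiv_symm_apply {a b : ℂ} (ha : a ≠ 0) (p : ℝ × ℂ) :
    (shearEquiv a b ha).symm p = (p.1, (p.2 - p.1 * b) / a) := by
  simp [shearEquiv, div_eq_mul_inv]

/-- The derivative of the second component of `beckerMap φ (s, ·)` at `z`, divided by `φ' z`.
Becker's bound keeps it in the unit disk about `1`. -/
noncomputable def beckerFactor (φ : ℂ → ℂ) (s : ℝ) (z : ℂ) : ℂ :=
  1 + (1 - s) * (z * logDeriv (deriv φ) z)

lemma hasStrictFDerivAt_beckerMap {φ : ℂ → ℂ} {s : ℝ} {z : ℂ} (hφ : AnalyticAt ℂ φ z)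
    (hφ' : deriv φ z ≠ 0) (hw : beckerFactor φ s z ≠ 0) :
    HasStrictFDerivAt (beckerMap φ)
      (shearEquiv (deriv φ z * beckerFactor φ s z) (φ z - z * deriv φ z)
        (mul_ne_zero hφ' hw) : ℝ × ℂ →L[ℝ] ℝ × ℂ) (s, z) := by
  have hs : HasStrictFDerivAt (fun p : ℝ × ℂ => (p.1 : ℂ))
      (ofRealCLM.comp (ContinuousLinearMap.fst ℝ ℝ ℂ)) (s, z) :=
    (ofRealCLM.comp (ContinuousLinearMap.fst ℝ ℝ ℂ)).hasStrictFDerivAt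
  have hcomp {ψ : ℂ → ℂ} {ψ' : ℂ} (hψ : HasStrictDerivAt ψ ψ' z) :=
    (hψ.hasStrictFDerivAt.restrictScalars ℝ).comp (s, z)
      (hasStrictFDerivAt_snd (𝕜 := ℝ) (E := ℝ) (F := ℂ))
  have hzφ' := (hasStrictDerivAt_id z).mul hφ.deriv.hasStrictDerivAt
  refine (hasStrictFDerivAt_fst.prodMk ((hs.mul (hcomp hφ.hasStrictDerivAt)).add
    ((hs.const_sub 1).mul (hcomp hzφ')))).congr_fderiv ?_
  have hfactor : deriv φ z * beckerFactor φ s z =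
      s * deriv φ z + (1 - s) * (deriv φ z + z * deriv (deriv φ) z) := by
    rw [beckerFactor, logDeriv_apply]
    field_simp
    ring
  ext <;> simp [hfactor] <;> ring

lemma exists_beckerMap_lift {φ : ℂ → ℂ} {s : ℝ} {z : ℂ} (hs : s ≠ 0) (hφ : AnalyticAt ℂ φ z)
    (hφ' : deriv φ z ≠ 0) (hw : beckerFactor φ s z ≠ 0) :
    ∃ ζ : ℝ → ℂ, ζ s = z ∧ HasDerivAt ζ (z / (s * beckerFactor φ s z)) s ∧
      ∀ᶠ t in 𝓝 s, beckerMap φ (t, ζ t) = (t / s) • beckerMap φ (s, z) := by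
  have hγ : HasDerivAt (fun t : ℝ => (t / s) • beckerMap φ (s, z))
      (s⁻¹ • beckerMap φ (s, z)) s := by
    simpa using ((hasDerivAt_id s).div_const s).smul_const (beckerMap φ (s, z))
  obtain ⟨P, hPs, hP, hlift⟩ :=
    exists_hasDerivAt_lift (hasStrictFDerivAt_beckerMap hφ hφ' hw) hγ (by simp [hs])
  refine ⟨fun t => (P t).2, by simp [hPs], ?_, ?_⟩
  · refine (hasFDerivAt_snd.comp_hasDerivAt s hP).congr_deriv ?_
    simp only [beckerMap, Prod.smul_mk, smul_eq_mul, smul_add, real_smul, ofReal_inv,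
      shearEquiv_symm_apply, ofReal_mul, ContinuousLinearMap.coe_snd']
    field_simp
    ring
  · filter_upwards [hlift] with t ht
    have hfst : (P t).1 = t := by simpa [beckerMap, hs] using congrArg Prod.fst ht
    rwa [← Prod.mk.eta (p := P t), hfst] at ht

section BeckerCriterion

variable {φ : ℂ → ℂ} {ρ s : ℝ} {z : ℂ}

lemma norm_beckerFactor_sub_one_lt_one (hb : ‖z * logDeriv (deriv φ) z‖ ≤ 1 / (1 - ‖z‖ ^ 2))
    (hρ : ρ < 1) (hz : (s, z) ∈ beckerRegion ρ) : ‖beckerFactor φ s z - 1‖ < 1 := by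
  rw [beckerFactor, add_sub_cancel_left]
  exact norm_one_sub_mul_lt_one hρ hz hb

lemma exists_beckerMap_lift_mem_beckerRegion (hφ : DifferentiableOn ℂ φ (ball 0 1))
    (hφ' : ∀ z ∈ ball (0 : ℂ) 1, deriv φ z ≠ 0)
    (hb : ∀ z ∈ ball (0 : ℂ) 1, ‖z * logDeriv (deriv φ) z‖ ≤ 1 / (1 - ‖z‖ ^ 2))
    (hρ : ρ < 1) (hs : 0 < s) (hz : (s, z) ∈ beckerRegion ρ) :
    ∃ ζ : ℝ → ℂ, ζ s = z ∧ ContinuousAt ζ s ∧ ∀ᶠ t in 𝓝[<] s,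
      (t, ζ t) ∈ beckerRegion ρ ∧ beckerMap φ (t, ζ t) = (t / s) • beckerMap φ (s, z) := by
  have hIcc : ∀ᶠ t in 𝓝[<] s, t ∈ Icc (0 : ℝ) 1 := by
    filter_upwards [Ioo_mem_nhdsLT hs] with t ht using ⟨ht.1.le, ht.2.le.trans hz.1.2⟩
  have hball := mem_ball_of_mem_beckerRegion hρ hz
  rcases eq_or_ne z 0 with rfl | hz0
  · refine ⟨fun _ => 0, rfl, continuousAt_const, ?_⟩
    filter_upwards [hIcc] with t ht
    refine ⟨⟨ht, ?_⟩, ?_⟩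
    · have hρ0 : 0 ≤ ρ := nonneg_of_mul_nonneg_left (by simpa using hz.2) hs
      simpa using mul_nonneg hρ0 ht.1
    · ext1
      · simp [beckerMap, hs.ne']
      · simp [beckerMap, hs.ne', ← mul_assoc]
  have hw := norm_beckerFactor_sub_one_lt_one (hb z hball) hρ hz
  obtain ⟨ζ, hζs, hζ, hlift⟩ := exists_beckerMap_lift hs.ne'
    (hφ.analyticAt (isOpen_ball.mem_nhds hball)) (hφ' z hball) (ne_zero_of_norm_sub_one_lt_one hw)
  subst hζs
  refine ⟨ζ, rfl, hζ.continuousAt, ?_⟩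
  filter_upwards [hIcc, eventually_norm_sq_mul_lt hs.ne' hz0 hζ hw, nhdsWithin_le_nhds hlift]
    with t ht hlt heq
  refine ⟨⟨ht, le_of_mul_le_mul_right ?_ hs⟩, heq⟩
  calc ‖ζ t‖ ^ 2 * s ≤ ‖ζ s‖ ^ 2 * t := hlt.le
    _ ≤ ρ * s * t := mul_le_mul_of_nonneg_right hz.2 ht.1
    _ = ρ * t * s := mul_right_comm ρ s t

lemma injOn_beckerMap (hφ : DifferentiableOn ℂ φ (ball 0 1))
    (hφ' : ∀ z ∈ ball (0 : ℂ) 1, deriv φ z ≠ 0)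
    (hb : ∀ z ∈ ball (0 : ℂ) 1, ‖z * logDeriv (deriv φ) z‖ ≤ 1 / (1 - ‖z‖ ^ 2))
    (hρ : ρ < 1) : InjOn (beckerMap φ) (beckerRegion ρ) := by
  have hderiv (p : ℝ × ℂ) (hp : p ∈ beckerRegion ρ) :
      ∃ G' : (ℝ × ℂ) ≃L[ℝ] ℝ × ℂ,
        HasStrictFDerivAt (beckerMap φ) (G' : ℝ × ℂ →L[ℝ] ℝ × ℂ) p :=
    have hball := mem_ball_of_mem_beckerRegion hρ hp
    ⟨_, hasStrictFDerivAt_beckerMap (hφ.analyticAt (isOpen_ball.mem_nhds hball)) (hφ' _ hball)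
      (ne_zero_of_norm_sub_one_lt_one (norm_beckerFactor_sub_one_lt_one (hb _ hball) hρ hp))⟩
  refine injOn_of_collision_descent (isCompact_beckerRegion ρ)
    (fun p hp => (hderiv p hp).elim fun _ h => h.continuousAt.continuousWithinAt)
    (fun p hp => (hderiv p hp).elim fun _ h => exists_mem_nhds_injOn_of_hasStrictFDerivAt h)
    continuousOn_fst ?_
  rintro ⟨s, x⟩ hx ⟨t, y⟩ hy hne heq
  obtain rfl : s = t := congrArg Prod.fst heq
  have hxy : x ≠ y := fun h => hne (h ▸ rfl)
  have hs : 0 ≤ s := hx.1.1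
  rcases hs.eq_or_lt with hs | hs
  · have hzero {z : ℂ} (hz : (s, z) ∈ beckerRegion ρ) : z = 0 := by
      simpa [← hs] using hz.2
    exact absurd ((hzero hx).trans (hzero hy).symm) hxy
  obtain ⟨X, rfl, hXc, hX⟩ := exists_beckerMap_lift_mem_beckerRegion hφ hφ' hb hρ hs hx
  obtain ⟨Y, rfl, hYc, hY⟩ := exists_beckerMap_lift_mem_beckerRegion hφ hφ' hb hρ hs hy
  have hXY : ∀ᶠ t in 𝓝[<] s, X t ≠ Y t :=
    nhdsWithin_le_nhds ((hXc.ne_iff_eventually_ne hYc).1 hxy)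
  obtain ⟨t, ⟨hXt, hXeq⟩, ⟨hYt, hYeq⟩, hXYt, hts⟩ :=
    (hX.and (hY.and (hXY.and self_mem_nhdsWithin))).exists
  exact ⟨(t, X t), hXt, (t, Y t), hYt, fun h => hXYt (congrArg Prod.snd h),
    by rw [hXeq, hYeq, heq], hts⟩

theorem injOn_ball_of_norm_mul_logDeriv_deriv_le (hφ : DifferentiableOn ℂ φ (ball 0 1))
    (hφ' : ∀ z ∈ ball (0 : ℂ) 1, deriv φ z ≠ 0)
    (hb : ∀ z ∈ ball (0 : ℂ) 1, ‖z * logDeriv (deriv φ) z‖ ≤ 1 / (1 - ‖z‖ ^ 2)) :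
    InjOn φ (ball 0 1) := by
  intro x hx y hy heq
  rw [mem_ball_zero_iff, ← sq_lt_one_iff₀ (norm_nonneg _)] at hx hy
  have hρ : max (‖x‖ ^ 2) (‖y‖ ^ 2) < 1 := max_lt hx hy
  have hmap : beckerMap φ (1, x) = beckerMap φ (1, y) := by simp [beckerMap, heq]
  have hinj := injOn_beckerMap hφ hφ' hb hρ (x₁ := (1, x)) (x₂ := (1, y))
    ⟨by simp, by simp⟩ ⟨by simp, by simp⟩ hmap
  exact congrArg Prod.snd hinj

end BeckerCriterion

lemma exists_hasDerivAt_logDeriv_exp_eq {g : ℂ → ℂ} {c : ℂ} {r : ℝ}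
    (hg : DifferentiableOn ℂ g (ball c r)) (hg0 : ∀ z ∈ ball c r, g z ≠ 0) :
    ∃ G : ℂ → ℂ, ∀ z ∈ ball c r, HasDerivAt G (logDeriv g z) z ∧ exp (G z) = g z := by
  have hlog : DifferentiableOn ℂ (logDeriv g) (ball c r) :=
    (hg.deriv isOpen_ball).fun_div hg hg0
  obtain ⟨P, hP⟩ := hlog.isExactOn_ball
  have hexpP : EqOn (logDeriv g) (logDeriv fun z => exp (P z)) (ball c r) := fun z hz => by
    rw [logDeriv_apply (fun z => exp (P z)), (hP z hz).cexp.deriv,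
      mul_div_cancel_left₀ _ (exp_ne_zero _)]
  obtain ⟨a, ha, hga⟩ := (logDeriv_eqOn_iff hg
    (fun z hz => (hP z hz).cexp.differentiableAt.differentiableWithinAt) isOpen_ball
    (convex_ball c r).isPreconnected (fun _ _ => exp_ne_zero _) hg0).1 hexpP
  refine ⟨fun z => log a + P z, fun z hz => ⟨(hP z hz).const_add _, ?_⟩⟩
  simp [exp_add, exp_log ha, hga hz]

lemma exists_norm_eq_one_mul_eq_conj (a : ℂ) : ∃ l : ℂ, ‖l‖ = 1 ∧ l * a = conj a := by
  obtain ⟨c, hc, hca⟩ := exists_norm_eq_mul_self a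
  refine ⟨c ^ 2, by simp [hc], ?_⟩
  have hc' : c * conj c = 1 := by simp [mul_conj', hc]
  have hconj : (‖a‖ : ℂ) = conj c * conj a := by rw [← map_mul, ← hca, conj_ofReal]
  linear_combination c * (hconj - hca) + conj a * hc'

lemma one_add_mul_ne_zero_of_norm_lt_one {l w : ℂ} (hl : ‖l‖ = 1) (hw : ‖w‖ < 1) :
    1 + l * w ≠ 0 := by
  intro h
  have : ‖l * w‖ = 1 := by rw [← neg_eq_of_add_eq_zero_right h, norm_neg, norm_one]
  rw [norm_mul, hl, one_mul] at this
  exact hw.ne this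

lemma norm_conj_div_add_div_one_add_mul {l w : ℂ} (hl : ‖l‖ = 1) (hw : ‖w‖ < 1) :
    ‖conj w / (1 - (‖w‖ : ℂ) ^ 2) + l / (1 + l * w)‖ = 1 / (1 - ‖w‖ ^ 2) := by
  have hne := one_add_mul_ne_zero_of_norm_lt_one hl hw
  have hpos : 0 < 1 - ‖w‖ ^ 2 := sub_pos.2 (pow_lt_one₀ (norm_nonneg w) hw two_ne_zero)
  have hposC : 1 - (‖w‖ : ℂ) ^ 2 ≠ 0 := mod_cast hpos.ne'
  have hww : conj w * w = (‖w‖ : ℂ) ^ 2 := conj_mul' w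
  have hll : conj l * l = 1 := by simp [conj_mul', hl]
  have hsum : conj w / (1 - (‖w‖ : ℂ) ^ 2) + l / (1 + l * w) =
      l * conj (1 + l * w) / (((1 - ‖w‖ ^ 2 : ℝ) : ℂ) * (1 + l * w)) := by
    push_cast
    rw [div_add_div _ _ hposC hne]
    congr 1
    simp only [map_add, map_mul, map_one]
    linear_combination l * hww - conj w * hll
  rw [hsum, norm_div, norm_mul, norm_mul, hl, norm_conj, norm_real, Real.norm_of_nonneg hpos.le,
    one_mul, div_mul_cancel_right₀ (norm_ne_zero_iff.2 hne), one_div]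

/-- The analytic function `h * g ^ l`, where `G` is a branch of `log g`. For `‖l‖ = 1` it is the
analytic substitute for the logharmonic mapping `h * conj g`. -/
noncomputable def unimodularTwist (h G : ℂ → ℂ) (l z : ℂ) : ℂ :=
  h z * exp (l * G z)

section UnimodularTwist

variable {h g G : ℂ → ℂ} {U : Set ℂ} {l z : ℂ}

lemma unimodularTwist_eq_mul_conj_mul_exp (hG : exp (G z) = g z) :
    unimodularTwist h G l z = h z * conj (g z) * exp (l * G z - conj (G z)) := by
  rw [unimodularTwist, ← hG, ← exp_conj, mul_assoc, ← exp_add, add_sub_cancel]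

lemma logDeriv_eq_omegaOf_mul (hh0 : h z ≠ 0) (hh' : deriv h z ≠ 0) :
    logDeriv g z = omegaOf h g z * deriv h z / h z := by
  rw [logDeriv_apply, omegaOf]
  field_simp

lemma differentiableOn_omegaOf (hU : IsOpen U) (hh : DifferentiableOn ℂ h U)
    (hg : DifferentiableOn ℂ g U) (hg0 : ∀ z ∈ U, g z ≠ 0) (hh' : ∀ z ∈ U, deriv h z ≠ 0) :
    DifferentiableOn ℂ (omegaOf h g) U :=
  ((hg.deriv hU).fun_mul hh).fun_div (hg.fun_mul (hh.deriv hU))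
    fun z hz => mul_ne_zero (hg0 z hz) (hh' z hz)

lemma hasDerivAt_unimodularTwist (hh : DifferentiableAt ℂ h z) (hh0 : h z ≠ 0)
    (hh' : deriv h z ≠ 0) (hG : HasDerivAt G (logDeriv g z) z) :
    HasDerivAt (unimodularTwist h G l)
      (deriv h z * (1 + l * omegaOf h g z) * exp (l * G z)) z := by
  refine (hh.hasDerivAt.fun_mul (hG.const_mul l).cexp).congr_deriv ?_
  rw [logDeriv_eq_omegaOf_mul hh0 hh']
  field_simp

lemma logDeriv_deriv_unimodularTwist (hU : IsOpen U) (hh : DifferentiableOn ℂ h U)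
    (hg : DifferentiableOn ℂ g U) (hh0 : ∀ z ∈ U, h z ≠ 0) (hg0 : ∀ z ∈ U, g z ≠ 0)
    (hh' : ∀ z ∈ U, deriv h z ≠ 0) (hG : ∀ z ∈ U, HasDerivAt G (logDeriv g z) z)
    (hz : z ∈ U) (hlω : 1 + l * omegaOf h g z ≠ 0) :
    logDeriv (deriv (unimodularTwist h G l)) z = preSch h g z +
      (l - 1) * omegaOf h g z * (deriv h z / h z) +
      deriv (omegaOf h g) z * (conj (omegaOf h g z) / (1 - (‖omegaOf h g z‖ : ℂ) ^ 2) +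
        l / (1 + l * omegaOf h g z)) := by
  have hUz := hU.mem_nhds hz
  have hderiv : deriv (unimodularTwist h G l) =ᶠ[𝓝 z]
      fun z => deriv h z * (1 + l * omegaOf h g z) * exp (l * G z) := by
    filter_upwards [hUz] with w hw
    exact (hasDerivAt_unimodularTwist (hh.differentiableAt (hU.mem_nhds hw)) (hh0 w hw)
      (hh' w hw) (hG w hw)).deriv
  have hω : HasDerivAt (fun z => 1 + l * omegaOf h g z) (l * deriv (omegaOf h g) z) z :=
    (((differentiableOn_omegaOf hU hh hg hg0 hh').differentiableAt
      hUz).hasDerivAt.const_mul l).const_add 1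
  have hexp := ((hG z hz).const_mul l).cexp
  have hh'd := (hh.deriv hU).differentiableAt hUz
  have hlogω : logDeriv (fun z => 1 + l * omegaOf h g z) z =
      l * deriv (omegaOf h g) z / (1 + l * omegaOf h g z) := by
    rw [logDeriv_apply, hω.deriv]
  have hlogexp : logDeriv (fun z => exp (l * G z)) z =
      l * (omegaOf h g z * deriv h z / h z) := by
    rw [logDeriv_apply, hexp.deriv, mul_div_cancel_left₀ _ (exp_ne_zero _),
      logDeriv_eq_omegaOf_mul (hh0 z hz) (hh' z hz)]
  rw [(logDeriv_congr_nhds hderiv).eq_of_nhds,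
    logDeriv_mul (f := fun z => deriv h z * (1 + l * omegaOf h g z))
      (g := fun z => exp (l * G z)) z
      (mul_ne_zero (hh' z hz) hlω) (exp_ne_zero _) (hh'd.fun_mul hω.differentiableAt)
      hexp.differentiableAt,
    logDeriv_mul z (hh' z hz) hlω hh'd hω.differentiableAt, hlogω, hlogexp, logDeriv_apply, preSch]
  ring

lemma norm_mul_logDeriv_deriv_unimodularTwist_le (hU : IsOpen U) (hh : DifferentiableOn ℂ h U)
    (hg : DifferentiableOn ℂ g U) (hh0 : ∀ z ∈ U, h z ≠ 0) (hg0 : ∀ z ∈ U, g z ≠ 0)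
    (hh' : ∀ z ∈ U, deriv h z ≠ 0) (hG : ∀ z ∈ U, HasDerivAt G (logDeriv g z) z)
    (hz : z ∈ U) (hl : ‖l‖ = 1) (hω : ‖omegaOf h g z‖ < 1) :
    ‖z * logDeriv (deriv (unimodularTwist h G l)) z‖ ≤ ‖z * preSch h g z‖ +
      2 * ‖omegaOf h g z‖ * ‖z * (deriv h z / h z)‖ +
      ‖z * deriv (omegaOf h g) z‖ / (1 - ‖omegaOf h g z‖ ^ 2) := by
  have hl1 : ‖l - 1‖ ≤ 2 := (norm_sub_le l 1).trans_eq (by rw [hl, norm_one]; norm_num)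
  rw [logDeriv_deriv_unimodularTwist hU hh hg hh0 hg0 hh' hG hz
    (one_add_mul_ne_zero_of_norm_lt_one hl hω), mul_add, mul_add]
  refine norm_add₃_le.trans (add_le_add_three le_rfl ?_ (le_of_eq ?_))
  · rw [mul_left_comm, norm_mul, norm_mul (l - 1)]
    gcongr
  · rw [← mul_assoc, norm_mul, norm_conj_div_add_div_one_add_mul hl hω, mul_one_div]

lemma injOn_unimodularTwist (hh : DifferentiableOn ℂ h (ball 0 1))
    (hg : DifferentiableOn ℂ g (ball 0 1)) (hh0 : ∀ z ∈ ball 0 1, h z ≠ 0)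
    (hg0 : ∀ z ∈ ball 0 1, g z ≠ 0) (hh' : ∀ z ∈ ball 0 1, deriv h z ≠ 0)
    (hG : ∀ z ∈ ball 0 1, HasDerivAt G (logDeriv g z) z) (hl : ‖l‖ = 1)
    (hω : ∀ z ∈ ball 0 1, ‖omegaOf h g z‖ < 1)
    (hbound : ∀ z ∈ ball (0 : ℂ) 1, ‖z * preSch h g z‖ +
      2 * ‖omegaOf h g z‖ * ‖z * (deriv h z / h z)‖ +
      ‖z * deriv (omegaOf h g) z‖ / (1 - ‖omegaOf h g z‖ ^ 2) ≤ 1 / (1 - ‖z‖ ^ 2)) :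
    InjOn (unimodularTwist h G l) (ball 0 1) := by
  have hderiv z hz := hasDerivAt_unimodularTwist (l := l)
    (hh.differentiableAt (isOpen_ball.mem_nhds hz)) (hh0 z hz) (hh' z hz) (hG z hz)
  refine injOn_ball_of_norm_mul_logDeriv_deriv_le
    (fun z hz => (hderiv z hz).differentiableAt.differentiableWithinAt)
    (fun z hz => ?_) (fun z hz => ?_)
  · rw [(hderiv z hz).deriv]
    exact mul_ne_zero (mul_ne_zero (hh' z hz)
      (one_add_mul_ne_zero_of_norm_lt_one hl (hω z hz))) (exp_ne_zero _)
  · exact (norm_mul_logDeriv_deriv_unimodularTwist_le isOpen_ball hh hg hh0 hg0 hh' hG hz hl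
      (hω z hz)).trans (hbound z hz)

end UnimodularTwist

theorem becker_criterion_logharmonic_general {h g : ℂ → ℂ}
    (hh : DifferentiableOn ℂ h (ball 0 1)) (hg : DifferentiableOn ℂ g (ball 0 1))
    (hh0 : ∀ z ∈ ball 0 1, h z ≠ 0) (hg0 : ∀ z ∈ ball 0 1, g z ≠ 0)
    (hh' : ∀ z ∈ ball 0 1, deriv h z ≠ 0) (hω : ∀ z ∈ ball 0 1, ‖omegaOf h g z‖ < 1)
    (hbound : ∀ z ∈ ball (0 : ℂ) 1, ‖z * preSch h g z‖ +
      2 * ‖omegaOf h g z‖ * ‖z * (deriv h z / h z)‖ +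
      ‖z * deriv (omegaOf h g) z‖ / (1 - ‖omegaOf h g z‖ ^ 2) ≤ 1 / (1 - ‖z‖ ^ 2)) :
    InjOn (fun z => h z * conj (g z)) (ball 0 1) := by
  intro x hx y hy (heq : h x * conj (g x) = h y * conj (g y))
  obtain ⟨G, hG⟩ := exists_hasDerivAt_logDeriv_exp_eq hg hg0
  obtain ⟨l, hl, hlG⟩ := exists_norm_eq_one_mul_eq_conj (G x - G y)
  have hexp : l * G x - conj (G x) = l * G y - conj (G y) := by
    rw [map_sub] at hlG
    linear_combination hlG
  refine injOn_unimodularTwist hh hg hh0 hg0 hh' (fun z hz => (hG z hz).1) hl hω hbound hx hy ?_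
  rw [unimodularTwist_eq_mul_conj_mul_exp (hG x hx).2,
    unimodularTwist_eq_mul_conj_mul_exp (hG y hy).2, heq, hexp]

theorem becker_criterion_logharmonic
    (h g : ℂ → ℂ)
    (hh : DifferentiableOn ℂ h (Metric.ball (0 : ℂ) 1))
    (hg : DifferentiableOn ℂ g (Metric.ball (0 : ℂ) 1))
    (hh0 : ∀ z ∈ Metric.ball (0 : ℂ) 1, h z ≠ 0)
    (hg0 : ∀ z ∈ Metric.ball (0 : ℂ) 1, g z ≠ 0)
    (hh' : ∀ z ∈ Metric.ball (0 : ℂ) 1, deriv h z ≠ 0)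
    (hω : ∀ z ∈ Metric.ball (0 : ℂ) 1, ‖omegaOf h g z‖ < 1)
    (hbound : ∀ z ∈ Metric.ball (0 : ℂ) 1,
      ‖z * preSch h g z‖ +
        (1 + ‖omegaOf h g z‖) * ‖z * (deriv h z / h z)‖ +
        ‖z * deriv (omegaOf h g) z‖ / (1 - ‖omegaOf h g z‖ ^ 2) ≤
      1 / (1 - ‖z‖ ^ 2)) :
    Set.InjOn (fun z => h z * (starRingEnd ℂ) (g z)) (Metric.ball (0 : ℂ) 1) := by
  refine becker_criterion_logharmonic_general hh hg hh0 hg0 hh' hω fun z hz =>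
    le_trans ?_ (hbound z hz)
  gcongr
  linarith [hω z hz]
end

section
/- Ahlfors-type univalence criterion for logharmonic mappings: let f = h·conj(g) : 𝔻 → ℂ be a nonvanishing sense-preserving logharmonic mapping with dilatation ω, and let c ∈ ℂ with |c| ≤ 1, c ≠ −1. If for all z ∈ 𝔻, |(1−|z|²)·z·P_f(z) + c|z|²| + (1+|ω(z)|)·|(1−|z|²)·z·h'(z)/h(z)| + |z·ω'(z)|(1−|z|²)/(1−|ω(z)|²) ≤ 1, then f is univalent in 𝔻. -/
open Complex

open Metric Set Topology

/-!
The collisions `f z = f w` of `f = h * conj g` are collisions of holomorphic functions: writing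
`g = exp G`, choose `ε` unimodular with `ε * (G z - G w) = conj (G z - G w)`; then
`h * exp (ε * G)` takes the same value at `z` and `w`. The pre-Schwarzian of this function differs
from `P_f` by terms which the last two summands of the hypothesis absorb, so it satisfies Ahlfors'
criterion for holomorphic functions and is injective.

Ahlfors' criterion is proved with its Löwner chain, on discs `‖z‖ ^ 2 ≤ r` with `r < 1` and with `c`
replaced by `r * c`, which makes all estimates strict. The chain is then an immersion over a compact
parameter domain, so the pairs of distinct points with equal image form a compact set. Two such
points can be moved together to a smaller parameter, hence a pair with minimal parameter cannot
exist.
-/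

section ParameterDependentMaps

variable {E F G : Type*} [NormedAddCommGroup E] [NormedSpace ℝ E]
  [NormedAddCommGroup F] [NormedSpace ℝ F]
  [NormedAddCommGroup G] [NormedSpace ℝ G]

theorem hasStrictFDerivAt_fst_prodMk {f : E × F → G} {A : E →L[ℝ] G} {B : F ≃L[ℝ] G} {p : E × F}
    (hf : HasStrictFDerivAt f (A.coprod (B : F →L[ℝ] G)) p) :
    HasStrictFDerivAt (fun x => (x.1, f x))
      ((ContinuousLinearEquiv.refl ℝ E).skewProd B A : E × F →L[ℝ] E × G) p := by
  refine (hasStrictFDerivAt_fst.prodMk hf).congr_fderiv ?_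
  ext <;> simp

variable [CompleteSpace E] [CompleteSpace F]

theorem exists_nhds_injOn_fst_prodMk {f : E × F → G} {A : E →L[ℝ] G} {B : F ≃L[ℝ] G} {p : E × F}
    (hf : HasStrictFDerivAt f (A.coprod (B : F →L[ℝ] G)) p) :
    ∃ u ∈ 𝓝 p, InjOn (fun x => (x.1, f x)) u := by
  have h := hasStrictFDerivAt_fst_prodMk hf
  let e := h.toOpenPartialHomeomorph
  exact ⟨e.source, e.open_source.mem_nhds h.mem_toOpenPartialHomeomorph_source, e.injOn⟩

theorem exists_hasDerivAt_eventually_eq {f : ℝ × F → G} {a : G} {B : F ≃L[ℝ] G} {s : ℝ} {x : F}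
    (hf : HasStrictFDerivAt f
      ((ContinuousLinearMap.toSpanSingleton ℝ a).coprod (B : F →L[ℝ] G)) (s, x))
    {γ : ℝ → G} {γ' : G} (hγ : HasDerivAt γ γ' s) (hγs : γ s = f (s, x)) :
    ∃ ψ : ℝ → F, ψ s = x ∧ HasDerivAt ψ (B.symm (γ' - a)) s ∧ ∀ᶠ σ in 𝓝 s, f (σ, ψ σ) = γ σ := by
  have h := hasStrictFDerivAt_fst_prodMk hf
  have hcurve : HasDerivAt (fun σ => (σ, γ σ)) (1, γ') s := (hasDerivAt_id s).prodMk hγ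
  have hinv := h.to_localInverse.hasFDerivAt
  have hright := h.eventually_right_inverse
  simp only [← hγs] at hinv hright
  refine ⟨fun σ => (h.localInverse _ _ _ (σ, γ σ)).2, ?_, ?_, ?_⟩
  · simp only [hγs]
    exact congrArg Prod.snd h.localInverse_apply_image
  · refine ((ContinuousLinearMap.snd ℝ ℝ F).hasFDerivAt.comp_hasDerivAt s
      (hinv.comp_hasDerivAt s hcurve)).congr_deriv ?_
    simp
  · filter_upwards [hcurve.continuousAt.eventually hright] with σ hσ
    obtain ⟨hfst, hsnd⟩ := Prod.ext_iff.1 hσ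
    dsimp only at hfst hsnd
    convert hsnd using 2
    exact Prod.ext hfst.symm rfl

end ParameterDependentMaps

theorem isCompact_setOf_eq_and_ne {X Y : Type*} [TopologicalSpace X] [T2Space X]
    [TopologicalSpace Y] [T2Space Y] {Φ : X → Y} {C : Set X} (hC : IsCompact C)
    (hΦ : ContinuousOn Φ C) (hinj : ∀ x ∈ C, ∃ u ∈ 𝓝 x, InjOn Φ u) :
    IsCompact {p : X × X | p ∈ C ×ˢ C ∧ Φ p.1 = Φ p.2 ∧ p.1 ≠ p.2} := by
  have heq : IsCompact {p : X × X | p ∈ C ×ˢ C ∧ Φ p.1 = Φ p.2} := by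
    have hcont : ContinuousOn (fun p : X × X => (Φ p.1, Φ p.2)) (C ×ˢ C) := hΦ.prodMap hΦ
    exact (hC.prod hC).of_isClosed_subset
      (hcont.preimage_isClosed_of_isClosed (hC.prod hC).isClosed isClosed_diagonal)
      inter_subset_left
  choose! u hu hinj using hinj
  convert heq.diff (isOpen_biUnion fun x (_ : x ∈ C) => (isOpen_interior (s := u x)).prod
    (isOpen_interior (s := u x))) using 1
  ext ⟨x, y⟩
  simp only [Set.mem_ofPred_eq, Set.mem_sdiff, mem_iUnion₂, mem_prod, not_exists, not_and,
    and_assoc]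
  refine ⟨fun ⟨hx, hy, hxy, hne⟩ => ⟨hx, hy, hxy, fun z hz hxz hyz =>
    hne (hinj z hz (interior_subset hxz) (interior_subset hyz) hxy)⟩,
    fun ⟨hx, hy, hxy, hnot⟩ => ⟨hx, hy, hxy, ?_⟩⟩
  rintro rfl
  have hxu : x ∈ interior (u x) := mem_interior_iff_mem_nhds.2 (hu x hx)
  exact hnot x hx hxu hxu

theorem injOn_of_forall_exists_collision_lt {X Y : Type*} [TopologicalSpace X] [T2Space X]
    [TopologicalSpace Y] [T2Space Y] {Φ : X → Y} {C : Set X} (hC : IsCompact C)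
    (hΦ : ContinuousOn Φ C) (hinj : ∀ x ∈ C, ∃ u ∈ 𝓝 x, InjOn Φ u) {μ : X → ℝ}
    (hμ : ContinuousOn μ C) (hlt : ∀ x ∈ C, ∀ y ∈ C, Φ x = Φ y → x ≠ y →
      ∃ x' ∈ C, ∃ y' ∈ C, Φ x' = Φ y' ∧ x' ≠ y' ∧ μ x' < μ x) : InjOn Φ C := by
  intro x hx y hy hxy
  by_contra hne
  obtain ⟨p, ⟨hp, hpeq, hpne⟩, hmin⟩ :=
    (isCompact_setOf_eq_and_ne hC hΦ hinj).exists_isMinOn ⟨(x, y), ⟨hx, hy⟩, hxy, hne⟩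
      (hμ.comp continuousOn_fst fun p hp => hp.1.1)
  obtain ⟨x', hx', y', hy', heq, hne', hμlt⟩ := hlt p.1 hp.1 p.2 hp.2 hpeq hpne
  exact hμlt.not_ge (isMinOn_iff.1 hmin (x', y') ⟨⟨hx', hy'⟩, heq, hne'⟩)

theorem exists_exp_eqOn_ball {g : ℂ → ℂ} {x : ℂ} {R : ℝ} (hg : DifferentiableOn ℂ g (ball x R))
    (hg0 : ∀ z ∈ ball x R, g z ≠ 0) :
    ∃ G : ℂ → ℂ, (∀ z ∈ ball x R, HasDerivAt G (logDeriv g z) z) ∧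
      EqOn (fun z => exp (G z)) g (ball x R) := by
  obtain ⟨G, hGx, hG⟩ := ((hg.deriv isOpen_ball).div hg hg0).isExactOn_ball.with_val_at
    x (log (g x))
  refine ⟨G, hG, ?_⟩
  have hGd : DifferentiableOn ℂ G (ball x R) :=
    fun z hz => (hG z hz).differentiableAt.differentiableWithinAt
  obtain hempty | ⟨y, hy⟩ := (ball x R).eq_empty_or_nonempty
  · simp [hempty]
  have hx : x ∈ ball x R := mem_ball_self (dist_nonneg.trans_lt hy)
  obtain ⟨k, -, hk⟩ := (logDeriv_eqOn_iff hGd.cexp hg isOpen_ball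
    (convex_ball x R).isPreconnected hg0 fun z _ => exp_ne_zero _).1 fun z hz => by
      rw [logDeriv_apply, (hG z hz).cexp.deriv, mul_div_cancel_left₀ _ (exp_ne_zero _)]
      rfl
  have hk1 : k = 1 := by
    have := hk hx
    simp only [hGx, exp_log (hg0 x hx), Pi.smul_apply, smul_eq_mul] at this
    exact (mul_eq_right₀ (hg0 x hx)).1 this.symm
  simpa [hk1] using hk

theorem exists_norm_eq_one_mul_eq_conj_s15 (w : ℂ) :
    ∃ ε : ℂ, ‖ε‖ = 1 ∧ ε * w = starRingEnd ℂ w := by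
  obtain rfl | hw := eq_or_ne w 0
  · exact ⟨1, by simp⟩
  · exact ⟨starRingEnd ℂ w / w, by simp [hw], div_mul_cancel₀ _ hw⟩

theorem exists_norm_eq_one_mul_exp_eq {a b u v : ℂ}
    (hab : a * starRingEnd ℂ (exp u) = b * starRingEnd ℂ (exp v)) :
    ∃ ε : ℂ, ‖ε‖ = 1 ∧ a * exp (ε * u) = b * exp (ε * v) := by
  obtain ⟨ε, hε, hconj⟩ := exists_norm_eq_one_mul_eq_conj_s15 (u - v)
  refine ⟨ε, hε, ?_⟩
  have hu : ε * u = starRingEnd ℂ u + (ε * v - starRingEnd ℂ v) := by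
    rw [map_sub] at hconj
    linear_combination hconj
  calc a * exp (ε * u)
      = a * starRingEnd ℂ (exp u) * exp (ε * v - starRingEnd ℂ v) := by
        rw [hu, exp_add, exp_conj, mul_assoc]
    _ = b * exp (ε * v) := by
        rw [hab, mul_assoc, ← exp_conj, ← exp_add, add_sub_cancel]

theorem norm_one_sub_norm_sq {w : ℂ} (hw : ‖w‖ ≤ 1) : ‖(1 - (‖w‖ : ℂ) ^ 2)‖ = 1 - ‖w‖ ^ 2 := by
  exact_mod_cast Complex.norm_of_nonneg (sub_nonneg.2 (pow_le_one₀ (norm_nonneg w) hw))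

theorem norm_add_conj_div_one_add_mul_le_one {ε w : ℂ} (hε : ‖ε‖ ≤ 1) (hw : ‖w‖ ≤ 1) :
    ‖(ε + starRingEnd ℂ w) / (1 + ε * w)‖ ≤ 1 := by
  rw [norm_div]
  refine div_le_one_of_le₀ ?_ (norm_nonneg _)
  rw [← sq_le_sq₀ (norm_nonneg _) (norm_nonneg _)]
  have hprod : 0 ≤ (1 - ‖ε‖ ^ 2) * (1 - ‖w‖ ^ 2) :=
    mul_nonneg (sub_nonneg.2 (pow_le_one₀ (norm_nonneg ε) hε))
      (sub_nonneg.2 (pow_le_one₀ (norm_nonneg w) hw))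
  have hdiff : ‖1 + ε * w‖ ^ 2 - ‖ε + starRingEnd ℂ w‖ ^ 2 = (1 - ‖ε‖ ^ 2) * (1 - ‖w‖ ^ 2) := by
    simp only [← normSq_eq_norm_sq, normSq_apply, add_re, add_im, one_re, one_im, mul_re, mul_im,
      conj_re, conj_im]
    ring
  linarith

theorem one_half_lt_re_inv_one_add {p : ℂ} (hp : ‖p‖ < 1) : 1 / 2 < ((1 + p)⁻¹).re := by
  have hsq : normSq p < 1 := by
    rw [normSq_eq_norm_sq]
    exact pow_lt_one₀ (norm_nonneg p) hp two_ne_zero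
  rw [inv_re, lt_div_iff₀ (normSq_pos.2 (slitPlane_ne_zero (mem_slitPlane_of_norm_lt_one hp)))]
  simp only [normSq_apply, add_re, add_im, one_re, one_im, zero_add] at hsq ⊢
  linarith

theorem eventually_norm_sq_le {ψ : ℝ → ℂ} {s r : ℝ} {p : ℂ} (hs : 0 < s) (hr : 0 < r)
    (hp : ‖p‖ < 1) (hψ : HasDerivAt ψ (ψ s / (s * (1 + p))) s) (hle : ‖ψ s‖ ^ 2 ≤ r * s) :
    ∀ᶠ σ in 𝓝[<] s, ‖ψ σ‖ ^ 2 ≤ r * σ := by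
  have hsub : HasDerivAt (fun σ => ‖ψ σ‖ ^ 2 - r * σ)
      (2 * inner ℝ (ψ s) (ψ s / (s * (1 + p))) - r) s := by
    simpa only [mul_one, id] using hψ.norm_sq.fun_sub ((hasDerivAt_id s).const_mul r)
  obtain hlt | heq := hle.lt_or_eq
  · filter_upwards [nhdsWithin_le_nhds (hsub.continuousAt.eventually_lt_const (sub_neg.2 hlt))]
      with σ hσ using (sub_neg.1 hσ).le
  have hinner : inner ℝ (ψ s) (ψ s / (s * (1 + p))) = r * ((1 + p)⁻¹).re := by
    have : ψ s / (s * (1 + p)) * starRingEnd ℂ (ψ s) = r * (1 + p)⁻¹ := by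
      rw [div_mul_eq_mul_div, mul_conj', ← ofReal_pow, heq, ofReal_mul,
        mul_comm (s : ℂ), mul_div_mul_right _ _ (ofReal_ne_zero.2 hs.ne'), div_eq_mul_inv]
    rw [Complex.inner, this, re_ofReal_mul]
  -- The derivative is `r * (2 * re (1 + p)⁻¹ - 1)`, which is positive because `‖p‖ < 1`.
  have hpos : 0 < deriv (fun σ => ‖ψ σ‖ ^ 2 - r * σ) s := by
    rw [hsub.deriv, hinner]
    nlinarith [one_half_lt_re_inv_one_add hp]
  filter_upwards [nhdsWithin_le_nhds
    (eventually_nhdsWithin_sign_eq_of_deriv_pos hpos (sub_eq_zero.2 heq)),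
    self_mem_nhdsWithin] with σ hsign hσ
  rw [sign_neg (sub_neg.2 (mem_Iio.1 hσ)), sign_eq_neg_one_iff] at hsign
  exact (sub_neg.1 hsign).le

/-- The expression bounded in Ahlfors' criterion for `φ`, with `‖z‖ ^ 2` replaced by a parameter `s`
independent of `z`, so that it becomes holomorphic in `z`. -/
noncomputable def ahlforsTerm (φ : ℂ → ℂ) (c : ℂ) (s : ℝ) (z : ℂ) : ℂ :=
  (1 - s) * (z * logDeriv (deriv φ) z) + c * s

/-- The Löwner chain of Ahlfors' criterion at `p = (s, z)`. The classical time is `t = 1 / s`, and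
the chain is rescaled so that it extends to `s = 0`. -/
noncomputable def ahlforsChain (φ : ℂ → ℂ) (c : ℂ) (p : ℝ × ℂ) : ℂ :=
  p.1 * (1 + c) * φ p.2 + (1 - p.1) * (p.2 * deriv φ p.2)

/-- The hypotheses of Ahlfors' criterion for a holomorphic function `φ` on the unit disc. -/
structure AhlforsCondition (φ : ℂ → ℂ) (c : ℂ) : Prop where
  differentiableOn : DifferentiableOn ℂ φ (ball 0 1)
  deriv_ne_zero : ∀ z ∈ ball (0 : ℂ) 1, deriv φ z ≠ 0
  norm_ahlforsTerm_le : ∀ z ∈ ball (0 : ℂ) 1, ‖ahlforsTerm φ c (‖z‖ ^ 2) z‖ ≤ 1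

/-- The pairs `(s, z)` along which the Löwner chain with final disc `‖z‖ ^ 2 ≤ r` is followed; the
disc of `z` at parameter `s` shrinks to a point as `s` tends to `0`. -/
def chainDomain (r : ℝ) : Set (ℝ × ℂ) := {p | p.1 ∈ Icc 0 1 ∧ ‖p.2‖ ^ 2 ≤ r * p.1}

section AhlforsCriterion

variable {φ : ℂ → ℂ} {c : ℂ} {r s : ℝ} {z : ℂ}

theorem mem_ball_of_mem_chainDomain (hr0 : 0 ≤ r) (hr1 : r < 1) (hz : (s, z) ∈ chainDomain r) :
    z ∈ ball (0 : ℂ) 1 := by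
  obtain ⟨⟨-, hs1⟩, hz⟩ := hz
  rw [mem_ball_zero_iff, ← sq_lt_one_iff₀ (norm_nonneg z)]
  nlinarith

theorem eq_zero_of_zero_mem_chainDomain (hz : (0, z) ∈ chainDomain r) : z = 0 := by
  simpa [chainDomain] using hz

theorem isCompact_chainDomain (hr0 : 0 ≤ r) : IsCompact (chainDomain r) := by
  have hclosed : IsClosed (chainDomain r) :=
    (isClosed_Icc.preimage continuous_fst).inter
      (isClosed_le (f := fun p : ℝ × ℂ => ‖p.2‖ ^ 2) (by fun_prop) (by fun_prop))
  refine (isCompact_Icc.prod (isCompact_closedBall 0 √r)).of_isClosed_subset hclosed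
    fun p ⟨hs, hz⟩ => ⟨hs, mem_closedBall_zero_iff.2 (Real.le_sqrt_of_sq_le (hz.trans ?_))⟩
  exact mul_le_of_le_one_right hr0 hs.2

namespace AhlforsCondition

theorem differentiableOn_ahlforsTerm (H : AhlforsCondition φ c) (s : ℝ) :
    DifferentiableOn ℂ (ahlforsTerm φ c s) (ball 0 1) :=
  have hφ' := H.differentiableOn.deriv isOpen_ball
  ((differentiableOn_id.mul ((hφ'.deriv isOpen_ball).div hφ' H.deriv_ne_zero)).const_mul
    _).add_const _

theorem norm_ahlforsTerm_le_of_sq_le (H : AhlforsCondition φ c) (hs : s < 1)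
    (hz : ‖z‖ ^ 2 ≤ s) : ‖ahlforsTerm φ c s z‖ ≤ 1 := by
  have hball : closedBall (0 : ℂ) √s ⊆ ball 0 1 :=
    closedBall_subset_ball ((Real.sqrt_lt' one_pos).2 (by simpa using hs))
  have hsphere : ∀ w : ℂ, ‖w‖ ^ 2 = s → ‖ahlforsTerm φ c s w‖ ≤ 1 := by
    rintro w rfl
    exact H.norm_ahlforsTerm_le w (hball (by simp))
  obtain heq | hlt := hz.eq_or_lt
  · exact hsphere z heq
  have hs0 : 0 < s := (sq_nonneg _).trans_lt hlt
  have hclosure : closure (ball (0 : ℂ) √s) = closedBall 0 √s :=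
    closure_ball _ (Real.sqrt_pos.2 hs0).ne'
  refine Complex.norm_le_of_forall_mem_frontier_norm_le (isBounded_ball (x := 0) (r := √s))
    ((H.differentiableOn_ahlforsTerm s).mono (hclosure.trans_subset hball)).diffContOnCl
    (fun w hw => hsphere w ?_) (hclosure ▸ mem_closedBall_zero_iff.2 (Real.le_sqrt_of_sq_le hz))
  rw [frontier_ball _ (Real.sqrt_pos.2 hs0).ne'] at hw
  rw [mem_sphere_zero_iff_norm.1 hw, Real.sq_sqrt hs0.le]

theorem norm_le_one (H : AhlforsCondition φ c) : ‖c‖ ≤ 1 := by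
  by_contra! hc
  obtain ⟨s, hcs, hs⟩ := exists_between (inv_lt_one_of_one_lt₀ hc)
  have hs0 : 0 < s := (inv_nonneg.2 (norm_nonneg c)).trans_lt hcs
  have hle : ‖c‖ * s ≤ 1 := by
    simpa [ahlforsTerm, abs_of_pos hs0] using
      H.norm_ahlforsTerm_le_of_sq_le (z := 0) hs (by simpa using hs0.le)
  exact hle.not_gt ((inv_lt_iff_one_lt_mul₀' (one_pos.trans hc)).1 hcs)

theorem norm_ahlforsTerm_mul_lt_one (H : AhlforsCondition φ c) (hr0 : 0 ≤ r) (hr1 : r < 1)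
    (hz : (s, z) ∈ chainDomain r) : ‖ahlforsTerm φ (r * c) s z‖ < 1 := by
  obtain ⟨⟨hs0, hs1⟩, hz⟩ := hz
  obtain rfl | hs0 := hs0.eq_or_lt
  · obtain rfl : z = 0 := by simpa using hz
    simp [ahlforsTerm]
  have hrs : r * s < 1 := by nlinarith
  set l := (1 - s) / (1 - r * s)
  have hl0 : 0 ≤ l := div_nonneg (sub_nonneg.2 hs1) (sub_nonneg.2 hrs.le)
  have hl1 : l < 1 := (div_lt_one (sub_pos.2 hrs)).2 (by nlinarith)
  have hm0 : 0 ≤ (1 - l) * (r * s) :=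
    mul_nonneg (sub_nonneg.2 hl1.le) (mul_nonneg hr0 hs0.le)
  have hcomb : ahlforsTerm φ (r * c) s z =
      l • ahlforsTerm φ c (r * s) z + ((1 - l) * (r * s)) • c := by
    have hl : (l : ℂ) * (1 - r * s) = 1 - s := by
      exact_mod_cast div_mul_cancel₀ (1 - s) (sub_pos.2 hrs).ne'
    simp only [ahlforsTerm, real_smul, ofReal_mul, ofReal_sub, ofReal_one]
    linear_combination -(z * logDeriv (deriv φ) z) * hl
  calc ‖ahlforsTerm φ (r * c) s z‖
      ≤ l * ‖ahlforsTerm φ c (r * s) z‖ + (1 - l) * (r * s) * ‖c‖ := by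
        rw [hcomb, ← norm_smul_of_nonneg hl0, ← norm_smul_of_nonneg hm0]
        exact norm_add_le _ _
    _ ≤ l * 1 + (1 - l) * (r * s) * 1 := by
        gcongr
        · exact H.norm_ahlforsTerm_le_of_sq_le hrs hz
        · exact H.norm_le_one
    _ < 1 := by nlinarith

theorem hasStrictFDerivAt_ahlforsChain (H : AhlforsCondition φ c) (κ : ℂ)
    (hz : z ∈ ball (0 : ℂ) 1) (hne : deriv φ z * (1 + ahlforsTerm φ κ s z) ≠ 0) :
    HasStrictFDerivAt (ahlforsChain φ κ)
      ((ContinuousLinearMap.toSpanSingleton ℝ ((1 + κ) * φ z - z * deriv φ z)).coprod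
        (ContinuousLinearEquiv.smulLeft (Units.mk0 _ hne) : ℂ ≃L[ℝ] ℂ)) (s, z) := by
  have hφ' := H.deriv_ne_zero z hz
  have hball : ball (0 : ℂ) 1 ∈ 𝓝 z := isOpen_ball.mem_nhds hz
  have hfst : HasStrictFDerivAt (fun p : ℝ × ℂ => (p.1 : ℂ)) (ofRealCLM ∘L .fst ℝ ℝ ℂ) (s, z) :=
    ofRealCLM.hasStrictFDerivAt.comp _ hasStrictFDerivAt_fst
  have hsnd : HasStrictFDerivAt (Prod.snd : ℝ × ℂ → ℂ) (.snd ℝ ℝ ℂ) (s, z) :=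
    hasStrictFDerivAt_snd
  have hφ := HasStrictDerivAt.comp_hasStrictFDerivAt (h₂ := φ) (s, z)
    (H.differentiableOn.analyticAt hball).hasStrictDerivAt hsnd
  have hderiv := HasStrictDerivAt.comp_hasStrictFDerivAt (h₂ := deriv φ) (s, z)
    ((H.differentiableOn.deriv isOpen_ball).analyticAt hball).hasStrictDerivAt hsnd
  refine (((hfst.mul_const (1 + κ)).mul hφ).add
    ((hfst.const_sub 1).mul (hsnd.mul hderiv))).congr_fderiv ?_
  ext <;> simp [ahlforsTerm, logDeriv_apply, Units.smul_def] <;> field_simp <;> ring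

theorem exists_backward_curve (H : AhlforsCondition φ c) (hr0 : 0 < r) (hr1 : r < 1) (hs : 0 < s)
    (hz : (s, z) ∈ chainDomain r) :
    ∃ ψ : ℝ → ℂ, ψ s = z ∧ ContinuousAt ψ s ∧ ∀ᶠ σ in 𝓝[<] s, (σ, ψ σ) ∈ chainDomain r ∧
      ahlforsChain φ (r * c) (σ, ψ σ) = σ / s * ahlforsChain φ (r * c) (s, z) := by
  have hball := mem_ball_of_mem_chainDomain hr0.le hr1 hz
  have hp := H.norm_ahlforsTerm_mul_lt_one hr0.le hr1 hz
  have hp' := slitPlane_ne_zero (mem_slitPlane_of_norm_lt_one hp)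
  have hsc : (s : ℂ) ≠ 0 := ofReal_ne_zero.2 hs.ne'
  have hφ' := H.deriv_ne_zero z hball
  -- Along the curve that keeps `ahlforsChain / σ` constant, the velocity is `ψ s / (s * (1 + p))`
  -- with `p` the Ahlfors term, to which `eventually_norm_sq_le` applies.
  have hγ : HasDerivAt (fun σ : ℝ => (σ : ℂ) / s * ahlforsChain φ (r * c) (s, z))
      (1 / s * ahlforsChain φ (r * c) (s, z)) s :=
    ((hasDerivAt_id s).ofReal_comp.div_const _).mul_const _
  obtain ⟨ψ, rfl, hψ, hchain⟩ := exists_hasDerivAt_eventually_eq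
    (H.hasStrictFDerivAt_ahlforsChain (r * c) hball (mul_ne_zero hφ' hp')) hγ
    (by rw [div_self hsc, one_mul])
  refine ⟨ψ, rfl, hψ.continuousAt, ?_⟩
  have hnorm : ∀ᶠ σ in 𝓝[<] s, ‖ψ σ‖ ^ 2 ≤ r * σ := by
    refine eventually_norm_sq_le hs hr0 hp (hψ.congr_deriv ?_) hz.2
    rw [ContinuousLinearEquiv.symm_apply_eq]
    simp only [ContinuousLinearEquiv.smulLeft_apply_apply, Units.smul_def, Units.val_mk0,
      smul_eq_mul, ahlforsChain]
    field_simp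
    ring
  filter_upwards [hnorm, nhdsWithin_le_nhds hchain, nhdsWithin_le_nhds (lt_mem_nhds hs),
    self_mem_nhdsWithin] with σ hσ hchain hσ0 hσs
  exact ⟨⟨⟨hσ0.le, (mem_Iio.1 hσs).le.trans hz.1.2⟩, hσ⟩, hchain⟩

theorem exists_collision_lt (H : AhlforsCondition φ c) (hr0 : 0 < r) (hr1 : r < 1) {w : ℂ}
    (hz : (s, z) ∈ chainDomain r) (hw : (s, w) ∈ chainDomain r) (hne : z ≠ w)
    (heq : ahlforsChain φ (r * c) (s, z) = ahlforsChain φ (r * c) (s, w)) :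
    ∃ σ < s, ∃ z' w' : ℂ, (σ, z') ∈ chainDomain r ∧ (σ, w') ∈ chainDomain r ∧ z' ≠ w' ∧
      ahlforsChain φ (r * c) (σ, z') = ahlforsChain φ (r * c) (σ, w') := by
  have hs : 0 < s := by
    refine hz.1.1.lt_of_ne' ?_
    rintro rfl
    exact hne ((eq_zero_of_zero_mem_chainDomain hz).trans (eq_zero_of_zero_mem_chainDomain hw).symm)
  obtain ⟨ψ, rfl, hψ, hψ'⟩ := H.exists_backward_curve hr0 hr1 hs hz
  obtain ⟨χ, rfl, hχ, hχ'⟩ := H.exists_backward_curve hr0 hr1 hs hw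
  have hψχ : ∀ᶠ σ in 𝓝[<] s, ψ σ ≠ χ σ :=
    nhdsWithin_le_nhds ((hψ.ne_iff_eventually_ne hχ).1 hne)
  obtain ⟨σ, ⟨hz', hchain⟩, ⟨hw', hchain'⟩, hne', hσ⟩ :=
    (hψ'.and (hχ'.and (hψχ.and self_mem_nhdsWithin))).exists
  exact ⟨σ, hσ, ψ σ, χ σ, hz', hw', hne', by rw [hchain, hchain', heq]⟩

theorem injOn_fst_prodMk_ahlforsChain (H : AhlforsCondition φ c) (hr0 : 0 < r) (hr1 : r < 1) :
    InjOn (fun p => (p.1, ahlforsChain φ (r * c) p)) (chainDomain r) := by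
  have hstrict : ∀ p ∈ chainDomain r, ∃ (A : ℝ →L[ℝ] ℂ) (B : ℂ ≃L[ℝ] ℂ),
      HasStrictFDerivAt (ahlforsChain φ (r * c)) (A.coprod (B : ℂ →L[ℝ] ℂ)) p := by
    intro p hp
    have hball := mem_ball_of_mem_chainDomain hr0.le hr1 hp
    have hterm := H.norm_ahlforsTerm_mul_lt_one hr0.le hr1 hp
    exact ⟨_, _, H.hasStrictFDerivAt_ahlforsChain (r * c) hball (mul_ne_zero
      (H.deriv_ne_zero _ hball) (slitPlane_ne_zero (mem_slitPlane_of_norm_lt_one hterm)))⟩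
  choose! A B hAB using hstrict
  refine injOn_of_forall_exists_collision_lt (isCompact_chainDomain hr0.le)
    (continuousOn_fst.prodMk fun p hp => (hAB p hp).continuousAt.continuousWithinAt)
    (fun p hp => exists_nhds_injOn_fst_prodMk (hAB p hp)) continuous_fst.continuousOn ?_
  rintro ⟨s, z⟩ hz ⟨t, w⟩ hw heq hne
  obtain ⟨rfl, heq⟩ := Prod.mk.inj heq
  obtain ⟨σ, hσ, z', w', hz', hw', hne', heq'⟩ :=
    H.exists_collision_lt hr0 hr1 hz hw (fun h => hne (congrArg _ h)) heq
  exact ⟨(σ, z'), hz', (σ, w'), hw', Prod.ext rfl heq', fun h => hne' (congrArg Prod.snd h), hσ⟩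

theorem injOn (H : AhlforsCondition φ c) : InjOn φ (ball 0 1) := by
  intro z hz w hw hzw
  rw [mem_ball_zero_iff, ← sq_lt_one_iff₀ (norm_nonneg _)] at hz hw
  obtain ⟨r, hr, hr1⟩ := exists_between (max_lt hz hw)
  have hr0 : 0 < r := (sq_nonneg _).trans_lt ((le_max_left _ _).trans_lt hr)
  obtain ⟨hzr, hwr⟩ := max_lt_iff.1 hr
  have hinj := H.injOn_fst_prodMk_ahlforsChain hr0 hr1 (x₁ := (1, z)) (x₂ := (1, w))
    ⟨by simp, by simpa using hzr.le⟩ ⟨by simp, by simpa using hwr.le⟩ (by simp [ahlforsChain, hzw])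
  exact congrArg Prod.snd hinj

end AhlforsCondition

end AhlforsCriterion

/-- The mapping `h * conj g` of the unit disc is nonvanishing, logharmonic and sense-preserving,
expressed through its factors and its dilatation `omegaOf h g`. -/
structure SensePreservingLogharmonic (h g : ℂ → ℂ) : Prop where
  differentiableOn_left : DifferentiableOn ℂ h (ball 0 1)
  differentiableOn_right : DifferentiableOn ℂ g (ball 0 1)
  left_ne_zero : ∀ z ∈ ball (0 : ℂ) 1, h z ≠ 0
  right_ne_zero : ∀ z ∈ ball (0 : ℂ) 1, g z ≠ 0
  deriv_left_ne_zero : ∀ z ∈ ball (0 : ℂ) 1, deriv h z ≠ 0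
  norm_omegaOf_lt_one : ∀ z ∈ ball (0 : ℂ) 1, ‖omegaOf h g z‖ < 1

namespace SensePreservingLogharmonic

variable {h g G : ℂ → ℂ} {c ε z : ℂ}

theorem differentiableAt_omegaOf (H : SensePreservingLogharmonic h g) (hz : z ∈ ball (0 : ℂ) 1) :
    DifferentiableAt ℂ (omegaOf h g) z := by
  have hball : ball (0 : ℂ) 1 ∈ 𝓝 z := isOpen_ball.mem_nhds hz
  exact (((H.differentiableOn_right.deriv isOpen_ball).differentiableAt hball).mul
    (H.differentiableOn_left.differentiableAt hball)).div
    ((H.differentiableOn_right.differentiableAt hball).mul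
      ((H.differentiableOn_left.deriv isOpen_ball).differentiableAt hball))
    (mul_ne_zero (H.right_ne_zero z hz) (H.deriv_left_ne_zero z hz))

theorem one_add_mul_omegaOf_ne_zero (H : SensePreservingLogharmonic h g) (hε : ‖ε‖ ≤ 1)
    (hz : z ∈ ball (0 : ℂ) 1) : 1 + ε * omegaOf h g z ≠ 0 :=
  slitPlane_ne_zero <| mem_slitPlane_of_norm_lt_one <| by
    rw [norm_mul]
    exact mul_lt_one_of_nonneg_of_lt_one_right hε (norm_nonneg _) (H.norm_omegaOf_lt_one z hz)

theorem logDeriv_right (H : SensePreservingLogharmonic h g) (hz : z ∈ ball (0 : ℂ) 1) :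
    logDeriv g z = omegaOf h g z * logDeriv h z := by
  have hhz := H.left_ne_zero z hz
  have hh'z := H.deriv_left_ne_zero z hz
  simp only [logDeriv_apply, omegaOf]
  field_simp

theorem hasDerivAt_mul_exp (H : SensePreservingLogharmonic h g) (ε : ℂ) (hz : z ∈ ball (0 : ℂ) 1)
    (hG : HasDerivAt G (logDeriv g z) z) :
    HasDerivAt (fun w => h w * exp (ε * G w))
      (deriv h z * ((1 + ε * omegaOf h g z) * exp (ε * G z))) z := by
  have hh := (H.differentiableOn_left.differentiableAt (isOpen_ball.mem_nhds hz)).hasDerivAt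
  refine (hh.fun_mul (hG.const_mul ε).cexp).congr_deriv ?_
  have hhz := H.left_ne_zero z hz
  rw [H.logDeriv_right hz, logDeriv_apply]
  field_simp

theorem logDeriv_deriv_mul_exp (H : SensePreservingLogharmonic h g) (hε : ‖ε‖ ≤ 1)
    (hG : ∀ z ∈ ball (0 : ℂ) 1, HasDerivAt G (logDeriv g z) z) (hz : z ∈ ball (0 : ℂ) 1) :
    logDeriv (deriv fun w => h w * exp (ε * G w)) z =
      deriv (deriv h) z / deriv h z + ε * deriv (omegaOf h g) z / (1 + ε * omegaOf h g z) +
        ε * omegaOf h g z * logDeriv h z := by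
  have hball : ball (0 : ℂ) 1 ∈ 𝓝 z := isOpen_ball.mem_nhds hz
  have hderiv : deriv (fun w => h w * exp (ε * G w)) =ᶠ[𝓝 z]
      fun w => deriv h w * ((1 + ε * omegaOf h g w) * exp (ε * G w)) := by
    filter_upwards [hball] with w hw using (H.hasDerivAt_mul_exp ε hw (hG w hw)).deriv
  have hprod := HasDerivAt.fun_mul
    ((H.differentiableOn_left.deriv isOpen_ball).differentiableAt hball).hasDerivAt
    ((((H.differentiableAt_omegaOf hz).hasDerivAt.const_mul ε).const_add 1).fun_mul
      ((hG z hz).const_mul ε).cexp)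
  have hh' := H.deriv_left_ne_zero z hz
  have hne := H.one_add_mul_omegaOf_ne_zero hε hz
  have hexp := exp_ne_zero (ε * G z)
  rw [logDeriv_apply, hderiv.deriv_eq, hderiv.eq_of_nhds, hprod.deriv, H.logDeriv_right hz]
  field_simp
  ring

theorem logDeriv_deriv_mul_exp_eq_preSch_add (H : SensePreservingLogharmonic h g) (hε : ‖ε‖ ≤ 1)
    (hG : ∀ z ∈ ball (0 : ℂ) 1, HasDerivAt G (logDeriv g z) z) (hz : z ∈ ball (0 : ℂ) 1) :
    logDeriv (deriv fun w => h w * exp (ε * G w)) z =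
      preSch h g z + (ε - 1) * omegaOf h g z * (deriv h z / h z) +
        (ε + starRingEnd ℂ (omegaOf h g z)) / (1 + ε * omegaOf h g z) *
          (deriv (omegaOf h g) z / (1 - (‖omegaOf h g z‖ : ℂ) ^ 2)) := by
  have hne := H.one_add_mul_omegaOf_ne_zero hε hz
  have hden : 1 - (‖omegaOf h g z‖ : ℂ) ^ 2 ≠ 0 := by
    rw [← norm_ne_zero_iff, norm_one_sub_norm_sq (H.norm_omegaOf_lt_one z hz).le]
    exact (sub_pos.2 (pow_lt_one₀ (norm_nonneg _) (H.norm_omegaOf_lt_one z hz) two_ne_zero)).ne'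
  have hsplit : ε / (1 + ε * omegaOf h g z) =
      (ε + starRingEnd ℂ (omegaOf h g z)) / (1 + ε * omegaOf h g z) /
          (1 - (‖omegaOf h g z‖ : ℂ) ^ 2) -
        starRingEnd ℂ (omegaOf h g z) / (1 - (‖omegaOf h g z‖ : ℂ) ^ 2) := by
    rw [← mul_conj'] at hden ⊢
    field_simp
    ring
  rw [H.logDeriv_deriv_mul_exp hε hG hz, preSch, logDeriv_apply]
  linear_combination deriv (omegaOf h g) z * hsplit

theorem ahlforsCondition_mul_exp (H : SensePreservingLogharmonic h g) (hε : ‖ε‖ ≤ 1)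
    (hG : ∀ z ∈ ball (0 : ℂ) 1, HasDerivAt G (logDeriv g z) z)
    (hbound : ∀ z ∈ ball (0 : ℂ) 1,
      ‖(1 - (‖z‖ : ℂ) ^ 2) * z * preSch h g z + c * (‖z‖ : ℂ) ^ 2‖ +
        2 * ‖omegaOf h g z‖ * ‖(1 - (‖z‖ : ℂ) ^ 2) * z * (deriv h z / h z)‖ +
        ‖z * deriv (omegaOf h g) z‖ * (1 - ‖z‖ ^ 2) / (1 - ‖omegaOf h g z‖ ^ 2) ≤ 1) :
    AhlforsCondition (fun z => h z * exp (ε * G z)) c where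
  differentiableOn z hz :=
    (H.hasDerivAt_mul_exp ε hz (hG z hz)).differentiableAt.differentiableWithinAt
  deriv_ne_zero z hz := by
    rw [(H.hasDerivAt_mul_exp ε hz (hG z hz)).deriv]
    exact mul_ne_zero (H.deriv_left_ne_zero z hz)
      (mul_ne_zero (H.one_add_mul_omegaOf_ne_zero hε hz) (exp_ne_zero _))
  norm_ahlforsTerm_le z hz := by
    have hω := H.norm_omegaOf_lt_one z hz
    have hz1 : ‖z‖ < 1 := mem_ball_zero_iff.1 hz
    have hdecomp : ahlforsTerm (fun z => h z * exp (ε * G z)) c (‖z‖ ^ 2) z =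
        (1 - (‖z‖ : ℂ) ^ 2) * z * preSch h g z + c * (‖z‖ : ℂ) ^ 2 +
          (ε - 1) * omegaOf h g z * ((1 - (‖z‖ : ℂ) ^ 2) * z * (deriv h z / h z)) +
          (ε + starRingEnd ℂ (omegaOf h g z)) / (1 + ε * omegaOf h g z) *
            (z * deriv (omegaOf h g) z * (1 - (‖z‖ : ℂ) ^ 2) /
              (1 - (‖omegaOf h g z‖ : ℂ) ^ 2)) := by
      rw [ahlforsTerm, H.logDeriv_deriv_mul_exp_eq_preSch_add hε hG hz]
      push_cast
      ring
    have hε2 : ‖ε - 1‖ ≤ 2 :=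
      (norm_sub_le _ _).trans (by rw [norm_one, ← one_add_one_eq_two]; gcongr)
    rw [hdecomp]
    refine norm_add₃_le.trans (le_trans ?_ (hbound z hz))
    gcongr ?_ + ?_ + ?_
    · rfl
    · rw [norm_mul, norm_mul]
      gcongr
    · refine (norm_mul_le _ _).trans ((mul_le_of_le_one_left (norm_nonneg _)
        (norm_add_conj_div_one_add_mul_le_one hε hω.le)).trans_eq ?_)
      rw [norm_div, norm_mul, norm_one_sub_norm_sq hz1.le, norm_one_sub_norm_sq hω.le]

end SensePreservingLogharmonic

theorem ahlfors_criterion_logharmonic_general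
    (h g : ℂ → ℂ)
    (hh : DifferentiableOn ℂ h (ball (0 : ℂ) 1))
    (hg : DifferentiableOn ℂ g (ball (0 : ℂ) 1))
    (hh0 : ∀ z ∈ ball (0 : ℂ) 1, h z ≠ 0)
    (hg0 : ∀ z ∈ ball (0 : ℂ) 1, g z ≠ 0)
    (hh' : ∀ z ∈ ball (0 : ℂ) 1, deriv h z ≠ 0)
    (hω : ∀ z ∈ ball (0 : ℂ) 1, ‖omegaOf h g z‖ < 1)
    (c : ℂ)
    (hbound : ∀ z ∈ ball (0 : ℂ) 1,
      ‖(1 - (‖z‖ : ℂ) ^ 2) * z * preSch h g z + c * (‖z‖ : ℂ) ^ 2‖ +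
        2 * ‖omegaOf h g z‖ * ‖(1 - (‖z‖ : ℂ) ^ 2) * z * (deriv h z / h z)‖ +
        ‖z * deriv (omegaOf h g) z‖ * (1 - ‖z‖ ^ 2) / (1 - ‖omegaOf h g z‖ ^ 2) ≤ 1) :
    InjOn (fun z => h z * starRingEnd ℂ (g z)) (ball 0 1) := by
  have H : SensePreservingLogharmonic h g := ⟨hh, hg, hh0, hg0, hh', hω⟩
  obtain ⟨G, hG, hexp⟩ := exists_exp_eqOn_ball hg hg0
  intro z hz w hw hzw
  obtain ⟨ε, hε, heq⟩ : ∃ ε : ℂ, ‖ε‖ = 1 ∧ h z * exp (ε * G z) = h w * exp (ε * G w) :=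
    exists_norm_eq_one_mul_exp_eq (by simpa only [hexp hz, hexp hw] using hzw)
  exact (H.ahlforsCondition_mul_exp hε.le hG hbound).injOn hz hw heq

theorem ahlfors_criterion_logharmonic
    (h g : ℂ → ℂ)
    (hh : DifferentiableOn ℂ h (Metric.ball (0 : ℂ) 1))
    (hg : DifferentiableOn ℂ g (Metric.ball (0 : ℂ) 1))
    (hh0 : ∀ z ∈ Metric.ball (0 : ℂ) 1, h z ≠ 0)
    (hg0 : ∀ z ∈ Metric.ball (0 : ℂ) 1, g z ≠ 0)
    (hh' : ∀ z ∈ Metric.ball (0 : ℂ) 1, deriv h z ≠ 0)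
    (hω : ∀ z ∈ Metric.ball (0 : ℂ) 1, ‖omegaOf h g z‖ < 1)
    (c : ℂ) (hc : ‖c‖ ≤ 1) (hc' : c ≠ -1)
    (hbound : ∀ z ∈ Metric.ball (0 : ℂ) 1,
      ‖(1 - (‖z‖ : ℂ) ^ 2) * z * preSch h g z + c * (‖z‖ : ℂ) ^ 2‖ +
        (1 + ‖omegaOf h g z‖) * ‖(1 - (‖z‖ : ℂ) ^ 2) * z * (deriv h z / h z)‖ +
        ‖z * deriv (omegaOf h g) z‖ * (1 - ‖z‖ ^ 2) / (1 - ‖omegaOf h g z‖ ^ 2) ≤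
      1) :
    Set.InjOn (fun z => h z * (starRingEnd ℂ) (g z)) (Metric.ball (0 : ℂ) 1) := by
  refine ahlfors_criterion_logharmonic_general h g hh hg hh0 hg0 hh' hω c fun z hz =>
    le_trans ?_ (hbound z hz)
  gcongr
  linarith [hω z hz]
end
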